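/- arXiv:math/9809185 — 2 statements merged into one kernel-verified Lean document; each statement's English description precedes it below -/
import Mathlib

section
/- Let p, q ≥ 2 with q − 1 = d(p − 1) for an integer d ≥ 1. The assignment x_i ↦ x_{d·i} preserves the defining relations and hence determines a group homomorphism j₁ : F(p) → F(q), and j₁ is a quasi-isometric embedding: there is a constant C ≥ 1 such that for all x ∈ F(p), (1/C)·|x|_p ≤ |j₁(x)|_q ≤ C·|x|_p. -/
open scoped BigOperators

/-- Relators of Thompson's group `F(p)`: `x_i⁻¹ x_j x_i x_{j+p-1}⁻¹` for `i < j`. -/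
def thompsonRels (p : ℕ) : Set (FreeGroup ℕ) :=
  { rel | ∃ i j : ℕ, i < j ∧
      rel = (FreeGroup.of i)⁻¹ * FreeGroup.of j * FreeGroup.of i *
        (FreeGroup.of (j + p - 1))⁻¹ }

/-- Thompson's group `F(p)`, presented with generators `x_i` (`i : ℕ`) and relations
`x_i⁻¹ · x_j · x_i = x_{j+p-1}` for `i < j`. -/
def FP (p : ℕ) : Type := PresentedGroup (thompsonRels p)

instance (p : ℕ) : Group (FP p) :=
  inferInstanceAs (Group (PresentedGroup (thompsonRels p)))

/-- The generator `x_i` of `F(p)`. -/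
def xg (p : ℕ) (i : ℕ) : FP p := PresentedGroup.of (rels := thompsonRels p) i

/-- Word length of `x : G` with respect to a set `S` of generators: the least length of a
word in elements of `S ∪ S⁻¹` whose product is `x`. -/
noncomputable def wordLength {G : Type*} [Group G] (S : Set G) (x : G) : ℕ :=
  sInf { n : ℕ | ∃ w : List G, w.length = n ∧ (∀ g ∈ w, g ∈ S ∨ g⁻¹ ∈ S) ∧ w.prod = x }

/-- The word length `|x|_p` on `F(p)`, with respect to the generators `x_0, …, x_{p-1}`. -/
noncomputable def wlen (p : ℕ) (x : FP p) : ℕ :=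
  wordLength { g : FP p | ∃ i, i < p ∧ g = xg p i } x

/-- The data of a candidate normal form
`x_{i₁}^{r₁} ⋯ x_{iₙ}^{rₙ} · x_{jₘ}^{-sₘ} ⋯ x_{j₁}^{-s₁}` in `F(p)`. -/
structure NFData (p : ℕ) where
  n : ℕ
  m : ℕ
  i : Fin n → ℕ
  r : Fin n → ℕ
  j : Fin m → ℕ
  s : Fin m → ℕ

namespace NFData

variable {p : ℕ}

/-- The element of `F(p)` represented by the normal form data, namely
`x_{i₁}^{r₁} ⋯ x_{iₙ}^{rₙ} · (x_{j₁}^{s₁} ⋯ x_{jₘ}^{sₘ})⁻¹`. -/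
def elem (d : NFData p) : FP p :=
  (List.ofFn fun k => xg p (d.i k) ^ d.r k).prod *
    ((List.ofFn fun l => xg p (d.j l) ^ d.s l).prod)⁻¹

/-- The generator with index `a` occurs in `d` (with positive or negative exponent). -/
def Occurs (d : NFData p) (a : ℕ) : Prop :=
  (∃ k, d.i k = a) ∨ (∃ l, d.j l = a)

/-- `d` is a normal form of `x ∈ F(p)`: the indices are strictly increasing, the exponents
are at least `1`, `iₙ ≠ jₘ` when both parts are nonempty, whenever a generator and its
inverse both occur one of the following `p-1` generators (or its inverse) occurs as well,
and the corresponding product equals `x`. -/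
def IsNormalFormOf (d : NFData p) (x : FP p) : Prop :=
  StrictMono d.i ∧ StrictMono d.j ∧
    (∀ k, 1 ≤ d.r k) ∧ (∀ l, 1 ≤ d.s l) ∧
    (∀ (hn : 0 < d.n) (hm : 0 < d.m),
      d.i ⟨d.n - 1, Nat.sub_lt hn Nat.one_pos⟩ ≠ d.j ⟨d.m - 1, Nat.sub_lt hm Nat.one_pos⟩) ∧
    (∀ a : ℕ, (∃ k, d.i k = a) → (∃ l, d.j l = a) →
      ∃ b : ℕ, a < b ∧ b ≤ a + p - 1 ∧ d.Occurs b) ∧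
    x = d.elem

/-- The quantity `D(x) = r₁ + ⋯ + rₙ + s₁ + ⋯ + sₘ + iₙ + jₘ` (the terms `iₙ`, `jₘ` being
omitted when `n = 0`, resp. `m = 0`). -/
def D (d : NFData p) : ℕ :=
  (∑ k, d.r k) + (∑ l, d.s l) +
    (if hn : 0 < d.n then d.i ⟨d.n - 1, Nat.sub_lt hn Nat.one_pos⟩ else 0) +
    (if hm : 0 < d.m then d.j ⟨d.m - 1, Nat.sub_lt hm Nat.one_pos⟩ else 0)

end NFData

/-- The tail sum `r_k + r_{k+1} + ⋯ + r_n`. -/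
def tailSum {n : ℕ} (r : Fin n → ℕ) (k : Fin n) : ℕ :=
  ∑ l ∈ Finset.univ.filter (fun l => k ≤ l), r l
/-- `N(x)` associated to a normal form in `F(2)` (Theorem 3):
the maximum of `i_k + r_k + ⋯ + r_n + 1` and `j_l + s_l + ⋯ + s_m + 1`. -/
def NFData.N2 (d : NFData 2) : ℕ :=
  max (Finset.univ.sup fun k => d.i k + tailSum d.r k + 1)
      (Finset.univ.sup fun l => d.j l + tailSum d.s l + 1)

/-- `N(x)` associated to a normal form in `F(p)` (Theorem 6):
the maximum of `⌊i_k/(p-1)⌋ + r_k + ⋯ + r_n + 1` and `⌊j_l/(p-1)⌋ + s_l + ⋯ + s_m + 1`. -/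
def NFData.Ngen {p : ℕ} (d : NFData p) : ℕ :=
  max (Finset.univ.sup fun k => d.i k / (p - 1) + tailSum d.r k + 1)
      (Finset.univ.sup fun l => d.j l / (p - 1) + tailSum d.s l + 1)

/-- `N(x) = max { i_k + r_k + ⋯ + r_n + 1 }` for a positive word (Proposition 2). -/
def posN {n : ℕ} (i r : Fin n → ℕ) : ℕ :=
  Finset.univ.sup fun k => i k + tailSum r k + 1

/-- `N₁(x) = max { ⌊i_k/(p-1)⌋ + r_k + ⋯ + r_n + 1 }` (Proposition 4). -/
def posN1 (p : ℕ) {n : ℕ} (i r : Fin n → ℕ) : ℕ :=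
  Finset.univ.sup fun k => i k / (p - 1) + tailSum r k + 1

/-- `N₂(x) = max { i_k + (p-1)(r_k + ⋯ + r_n) + 1 }` (Proposition 5). -/
def posN2 (p : ℕ) {n : ℕ} (i r : Fin n → ℕ) : ℕ :=
  Finset.univ.sup fun k => i k + (p - 1) * tailSum r k + 1

/-- `x ∈ ℤ[1/p]`. -/
def IsPAdicRational (p : ℕ) (x : ℝ) : Prop :=
  ∃ (a : ℤ) (n : ℕ), x = (a : ℝ) / (p : ℝ) ^ n

/-- Thompson's group `F(p)` realized as a set of permutations of `ℝ`: orientation-preserving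
piecewise-linear homeomorphisms of `[0,1]` (extended by the identity outside `[0,1]`) with
finitely many breakpoints, all in `ℤ[1/p]`, whose slopes are integer powers of `p`. -/
def PLSet (p : ℕ) : Set (Equiv.Perm ℝ) :=
  { f | Monotone f ∧ (∀ t : ℝ, t ≤ 0 → f t = t) ∧ (∀ t : ℝ, 1 ≤ t → f t = t) ∧
    ∃ B : Finset ℝ, (∀ b ∈ B, IsPAdicRational p b) ∧
      ∀ t : ℝ, t ∉ (B : Set ℝ) →
        ∃ ε > (0 : ℝ), ∃ (k : ℤ) (c : ℝ), ∀ s : ℝ, |s - t| < ε → f s = (p : ℝ) ^ k * s + c }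

/-- The map `Φ_p` on homeomorphisms: `(Φ_p f)(t) = t` for `t ≤ 1 - 1/p`, and
`(Φ_p f)(t) = ((p-1) + f(pt - (p-1)))/p` for `t ≥ 1 - 1/p`. -/
noncomputable def PhiMap (p : ℕ) (f : ℝ → ℝ) : ℝ → ℝ := fun t =>
  if t ≤ 1 - 1 / (p : ℝ) then t
  else (((p : ℝ) - 1) + f ((p : ℝ) * t - ((p : ℝ) - 1))) / (p : ℝ)

/-- The piecewise-linear homeomorphism `f_i` of `ℝ` corresponding to the generator `x_i`
of `F(p)`. -/
noncomputable def fgen (p : ℕ) (i : ℕ) : ℝ → ℝ := fun t =>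
  if t ≤ (i : ℝ) then t
  else if t ≤ (i : ℝ) + 1 then (p : ℝ) * t + (i : ℝ) * (1 - (p : ℝ))
  else t + (p : ℝ) - 1

namespace Thompson

def val (p : ℕ) (l : List ℕ) : FP p := (l.map (xg p)).prod

@[simp] lemma val_nil (p : ℕ) : val p [] = 1 := rfl
@[simp] lemma val_cons (p a : ℕ) (l : List ℕ) : val p (a :: l) = xg p a * val p l := by
  simp [val]
@[simp] lemma val_append (p : ℕ) (l l' : List ℕ) : val p (l ++ l') = val p l * val p l' := by
  simp [val]

lemma rel_aux (p : ℕ) (hp : 2 ≤ p) {i j : ℕ} (h : i < j) :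
    (xg p i)⁻¹ * xg p j * xg p i * (xg p (j + (p - 1)))⁻¹ = 1 := by
  have h1 : PresentedGroup.mk (thompsonRels p)
      ((FreeGroup.of i)⁻¹ * FreeGroup.of j * FreeGroup.of i *
        (FreeGroup.of (j + p - 1))⁻¹) = 1 :=
    PresentedGroup.one_of_mem ⟨i, j, h, rfl⟩
  have e : j + p - 1 = j + (p - 1) := by omega
  rw [e] at h1
  simp only [map_mul, map_inv] at h1
  exact h1

lemma rel (p : ℕ) (hp : 2 ≤ p) {i j : ℕ} (h : i < j) :
    xg p j * xg p i = xg p i * xg p (j + (p - 1)) := by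
  have := rel_aux p hp h
  rw [mul_inv_eq_one] at this
  rw [← this]; group

/-- lifting homomorphisms -/
lemma exists_lift (p : ℕ) (hp : 2 ≤ p) {G : Type*} [Group G] (f : ℕ → G)
    (hf : ∀ i j, i < j → f j * f i = f i * f (j + (p - 1))) :
    ∃ φ : FP p →* G, ∀ i, φ (xg p i) = f i := by
  have H : ∀ r ∈ thompsonRels p, FreeGroup.lift f r = 1 := by
    rintro r ⟨i, j, hij, rfl⟩
    have e : j + p - 1 = j + (p - 1) := by omega
    simp only [map_mul, map_inv, FreeGroup.lift_apply_of, e]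
    rw [mul_inv_eq_one, mul_assoc, hf i j hij]; group
  exact ⟨PresentedGroup.toGroup H, fun i => PresentedGroup.toGroup.of H⟩

/-! ### Piecewise linear representation -/

noncomputable def ff (p i : ℕ) (t : ℝ) : ℝ :=
  if t ≤ i then t else if t ≤ i + 1 then i + p * (t - i) else t + (p - 1)

noncomputable def gg (p i : ℕ) (t : ℝ) : ℝ :=
  if t ≤ i then t else if t ≤ i + p then i + (t - i) / p else t - (p - 1)

lemma gg_ff (p i : ℕ) (hp : 2 ≤ p) (t : ℝ) : gg p i (ff p i t) = t := by
  have hp' : (2 : ℝ) ≤ p := by exact_mod_cast hp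
  unfold gg ff
  by_cases h1 : t ≤ i
  · simp [h1]
  · push Not at h1
    by_cases h2 : t ≤ i + 1
    · have a1 : ¬ ((i : ℝ) + p * (t - i) ≤ i) := by nlinarith
      have a2 : (i : ℝ) + p * (t - i) ≤ i + p := by nlinarith
      rw [if_neg (not_le.2 h1), if_pos h2, if_neg a1, if_pos a2]
      field_simp; ring
    · rw [if_neg (not_le.2 h1), if_neg h2, if_neg (by linarith), if_neg (by linarith)]
      ring

lemma ff_gg (p i : ℕ) (hp : 2 ≤ p) (t : ℝ) : ff p i (gg p i t) = t := by
  have hp' : (2 : ℝ) ≤ p := by exact_mod_cast hp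
  unfold gg ff
  by_cases h1 : t ≤ i
  · simp [h1]
  · push Not at h1
    by_cases h2 : t ≤ i + p
    · have a0 : 0 < (t - i) / p := div_pos (by linarith) (by linarith)
      have a1 : ¬ ((i : ℝ) + (t - i) / p ≤ i) := by linarith
      have a2 : (t - i) / p ≤ 1 := by rw [div_le_one (by linarith)]; linarith
      rw [if_neg (not_le.2 h1), if_pos h2, if_neg a1, if_pos (by linarith)]
      field_simp; ring
    · rw [if_neg (not_le.2 h1), if_neg h2, if_neg (by linarith), if_neg (by linarith)]
      ring

lemma le_ff (p i : ℕ) (hp : 2 ≤ p) (t : ℝ) : t ≤ ff p i t := by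
  have hp' : (2 : ℝ) ≤ p := by exact_mod_cast hp
  unfold ff
  split_ifs with h1 h2
  · exact le_rfl
  · nlinarith
  · linarith

lemma lt_ff (p i : ℕ) (hp : 2 ≤ p) (t : ℝ) (ht : i < t) : t < ff p i t := by
  have hp' : (2 : ℝ) ≤ p := by exact_mod_cast hp
  unfold ff
  rw [if_neg (not_le.2 ht)]
  split_ifs with h2
  · nlinarith
  · linarith

lemma ff_fix (p i : ℕ) (t : ℝ) (ht : t ≤ i) : ff p i t = t := by
  simp [ff, ht]

lemma ff_rel (p i j : ℕ) (hp : 2 ≤ p) (hij : i < j) (t : ℝ) :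
    ff p i (ff p j t) = ff p (j + (p - 1)) (ff p i t) := by
  have hp' : (2 : ℝ) ≤ p := by exact_mod_cast hp
  have hij' : (i : ℝ) + 1 ≤ j := by exact_mod_cast hij
  have hc : ((j + (p - 1) : ℕ) : ℝ) = j + (p - 1) := by
    rw [Nat.cast_add, Nat.cast_sub (by omega)]; simp
  rcases le_or_gt t i with h1 | h1
  · rw [ff_fix p j t (by linarith), ff_fix p i t h1, ff_fix _ _ t (by rw [hc]; linarith)]
  rcases le_or_gt t (i + 1) with h2 | h2
  · rw [ff_fix p j t (by linarith), ff_fix p (j + (p - 1))]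
    rw [hc]; unfold ff
    rw [if_neg (not_le.2 h1), if_pos h2]; nlinarith
  · have e : ∀ s : ℝ, (i : ℝ) + 1 < s → ff p i s = s + (p - 1) := by
      intro s hs
      unfold ff
      rw [if_neg (by linarith), if_neg (by linarith)]
    rw [e t h2, e _ (h2.trans_le (le_ff p j hp t))]
    unfold ff
    rw [hc]
    by_cases h3 : t ≤ j
    · rw [if_pos h3, if_pos (by linarith)]
    · rw [if_neg h3, if_neg (show ¬ (t + ((p : ℝ) - 1) ≤ j + (p - 1)) by linarith)]
      by_cases h4 : t ≤ j + 1
      · rw [if_pos h4, if_pos (by linarith)]; ring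
      · rw [if_neg h4, if_neg (by linarith)]

noncomputable def fperm (p : ℕ) (hp : 2 ≤ p) (i : ℕ) : Equiv.Perm ℝ where
  toFun := gg p i
  invFun := ff p i
  left_inv := ff_gg p i hp
  right_inv := gg_ff p i hp

lemma exists_rep (p : ℕ) (hp : 2 ≤ p) :
    ∃ φ : FP p →* Equiv.Perm ℝ, ∀ i, φ (xg p i) = fperm p hp i := by
  apply exists_lift p hp
  intro i j hij
  rw [← inv_inj, mul_inv_rev, mul_inv_rev]
  ext t
  exact ff_rel p i j hp hij t

lemma gg_le (p i : ℕ) (hp : 2 ≤ p) (t : ℝ) : gg p i t ≤ t := by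
  have := le_ff p i hp (gg p i t)
  rwa [ff_gg p i hp] at this

lemma rep_le (p : ℕ) (hp : 2 ≤ p) (φ : FP p →* Equiv.Perm ℝ)
    (hφ : ∀ i, φ (xg p i) = fperm p hp i) (l : List ℕ) (t : ℝ) : φ (val p l) t ≤ t := by
  induction l with
  | nil => simp
  | cons a l ih =>
    rw [val_cons, map_mul, hφ, Equiv.Perm.mul_apply]
    exact (gg_le p a hp _).trans ih

lemma rep_fix (p : ℕ) (hp : 2 ≤ p) (φ : FP p →* Equiv.Perm ℝ)
    (hφ : ∀ i, φ (xg p i) = fperm p hp i) (l : List ℕ) (t : ℝ)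
    (h : ∀ a ∈ l, t ≤ (a : ℕ)) : φ (val p l) t = t := by
  induction l with
  | nil => simp
  | cons a l ih =>
    rw [val_cons, map_mul, hφ, Equiv.Perm.mul_apply, ih (fun b hb => h b (by simp [hb]))]
    show gg p a t = t
    simp [gg, h a (by simp)]

lemma val_ne (p : ℕ) (hp : 2 ≤ p) (a : ℕ) (l l' : List ℕ) (h : ∀ b ∈ l', a < b) :
    val p (a :: l) ≠ val p l' := by
  obtain ⟨φ, hφ⟩ := exists_rep p hp
  intro e
  have h1 := rep_fix p hp φ hφ l' (a + 1) (fun b hb => by exact_mod_cast h b hb)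
  rw [← e, val_cons, map_mul, hφ, Equiv.Perm.mul_apply] at h1
  have h2 := rep_le p hp φ hφ l (a + 1)
  have h3 : ff p a (gg p a (φ (val p l) (a + 1))) = ff p a (a + 1) := congrArg (ff p a) h1
  rw [ff_gg p a hp] at h3
  have h4 := lt_ff p a hp (a + 1) (by linarith)
  linarith

lemma val_inj (p : ℕ) (hp : 2 ≤ p) : ∀ (l l' : List ℕ), l.Pairwise (· ≤ ·) →
    l'.Pairwise (· ≤ ·) → val p l = val p l' → l = l'
  | [], [], _, _, _ => rfl
  | [], b :: l', _, _, e => (val_ne p hp b l' [] (by simp) e.symm).elim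
  | a :: l, [], _, _, e => (val_ne p hp a l [] (by simp) e).elim
  | a :: l, b :: l', h, h', e => by
    rw [List.pairwise_cons] at h h'
    rcases lt_trichotomy a b with hab | hab | hab
    · refine (val_ne p hp a l (b :: l') ?_ e).elim
      intro c hc
      rcases List.mem_cons.1 hc with rfl | hc
      · exact hab
      · exact hab.trans_le (h'.1 c hc)
    · subst hab
      rw [val_cons, val_cons, mul_right_inj] at e
      rw [val_inj p hp l l' h.2 h'.2 e]
    · refine (val_ne p hp b l' (a :: l) ?_ e.symm).elim
      intro c hc
      rcases List.mem_cons.1 hc with rfl | hc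
      · exact hab
      · exact hab.trans_le (h.1 c hc)

/-! ### Insertion -/

def ins (m k : ℕ) : List ℕ → List ℕ
  | [] => [k]
  | a :: l => if a ≤ k then a :: ins m k l else k :: (a :: l).map (· + m)

lemma mem_ins (m k b : ℕ) (l : List ℕ) (hl : l.Pairwise (· ≤ ·)) :
    b ∈ ins m k l ↔ b = k ∨ (b ∈ l ∧ b ≤ k) ∨ ∃ a ∈ l, k < a ∧ b = a + m := by
  induction l with
  | nil => simp [ins]
  | cons a l ih =>
    rw [List.pairwise_cons] at hl
    have ih := ih hl.2
    unfold ins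
    split_ifs with h
    · simp only [List.mem_cons, ih, exists_eq_or_imp]
      constructor
      · rintro (rfl | rfl | h1 | h1)
        · exact Or.inr (Or.inl ⟨Or.inl rfl, h⟩)
        · exact Or.inl rfl
        · exact Or.inr (Or.inl ⟨Or.inr h1.1, h1.2⟩)
        · exact Or.inr (Or.inr (Or.inr h1))
      · rintro (rfl | ⟨rfl | h1, h2⟩ | ⟨h1, h2⟩ | h1)
        · exact Or.inr (Or.inl rfl)
        · exact Or.inl rfl
        · exact Or.inr (Or.inr (Or.inl ⟨h1, h2⟩))
        · omega
        · exact Or.inr (Or.inr (Or.inr h1))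
    · have hall : ∀ c ∈ a :: l, k < c := by
        intro c hc
        rcases List.mem_cons.1 hc with rfl | hc
        · omega
        · have := hl.1 c hc; omega
      rw [List.mem_cons, List.mem_map]
      constructor
      · rintro (rfl | ⟨c, hc, rfl⟩)
        · exact Or.inl rfl
        · exact Or.inr (Or.inr ⟨c, hc, hall c hc, rfl⟩)
      · rintro (rfl | ⟨h1, h2⟩ | ⟨c, hc, _, rfl⟩)
        · exact Or.inl rfl
        · have := hall b h1; omega
        · exact Or.inr ⟨c, hc, rfl⟩

lemma length_ins (m k : ℕ) (l : List ℕ) : (ins m k l).length = l.length + 1 := by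
  induction l with
  | nil => rfl
  | cons a l ih =>
    unfold ins
    split_ifs
    · simp [ih]
    · simp

lemma sorted_map_add (m : ℕ) (l : List ℕ) (hl : l.Pairwise (· ≤ ·)) :
    (l.map (· + m)).Pairwise (· ≤ ·) := by
  rw [List.pairwise_map]
  exact hl.imp (by intros; omega)

lemma sorted_ins (m k : ℕ) (l : List ℕ) (hl : l.Pairwise (· ≤ ·)) :
    (ins m k l).Pairwise (· ≤ ·) := by
  induction l with
  | nil => simp [ins]
  | cons a l ih =>
    have hl' := List.pairwise_cons.1 hl
    unfold ins
    split_ifs with h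
    · rw [List.pairwise_cons]
      refine ⟨?_, ih hl'.2⟩
      intro b hb
      rw [mem_ins m k b l hl'.2] at hb
      rcases hb with rfl | hb | ⟨c, hc, _, rfl⟩
      · exact h
      · exact hl'.1 b hb.1
      · have := hl'.1 c hc; omega
    · rw [List.pairwise_cons]
      refine ⟨?_, sorted_map_add m _ hl⟩
      intro b hb
      obtain ⟨c, hc, rfl⟩ := List.mem_map.1 hb
      rcases List.mem_cons.1 hc with rfl | hc
      · omega
      · have := hl'.1 c hc; omega

lemma val_shift (p : ℕ) (hp : 2 ≤ p) (k : ℕ) (l : List ℕ) (h : ∀ a ∈ l, k < a) :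
    val p l * xg p k = xg p k * val p (l.map (· + (p - 1))) := by
  induction l with
  | nil => simp
  | cons a l ih =>
    rw [List.map_cons, val_cons, val_cons, mul_assoc, ih (fun b hb => h b (by simp [hb])),
      ← mul_assoc, rel p hp (h a (by simp)), mul_assoc]

lemma val_ins (p : ℕ) (hp : 2 ≤ p) (k : ℕ) (l : List ℕ) (hl : l.Pairwise (· ≤ ·)) :
    val p (ins (p - 1) k l) = val p l * xg p k := by
  induction l with
  | nil => simp [ins]
  | cons a l ih =>
    have hl' := List.pairwise_cons.1 hl
    unfold ins
    split_ifs with h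
    · rw [val_cons, ih hl'.2, val_cons, mul_assoc]
    · rw [val_cons, val_shift p hp]
      intro c hc
      rcases List.mem_cons.1 hc with rfl | hc
      · omega
      · have := hl'.1 c hc; omega

lemma exists_preimage (m k : ℕ) (l : List ℕ) (hl : l.Pairwise (· ≤ ·)) (hk : k ∈ l)
    (hg : ∀ a ∈ l, a ≤ k ∨ k + m < a) :
    ∃ l' : List ℕ, l'.Pairwise (· ≤ ·) ∧ ins m k l' = l ∧
      ∀ b ∈ l', b ∈ l ∨ (k < b ∧ b + m ∈ l) := by
  induction l with
  | nil => simp at hk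
  | cons a l ih =>
    have hl' := List.pairwise_cons.1 hl
    by_cases hkl : k ∈ l
    · obtain ⟨l', h1, h2, h3⟩ := ih hl'.2 hkl (fun b hb => hg b (by simp [hb]))
      have hak : a ≤ k := hl'.1 k hkl
      refine ⟨a :: l', ?_, ?_, ?_⟩
      · rw [List.pairwise_cons]
        refine ⟨?_, h1⟩
        intro b hb
        rcases h3 b hb with h | h
        · exact hl'.1 b h
        · omega
      · unfold ins
        rw [if_pos hak, h2]
      · intro b hb
        rcases List.mem_cons.1 hb with rfl | hb
        · simp
        · rcases h3 b hb with h | h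
          · simp [h]
          · right; exact ⟨h.1, by simp [h.2]⟩
    · have hka : k = a := by
        rcases List.mem_cons.1 hk with h | h
        · exact h
        · exact (hkl h).elim
      subst hka
      have hbig : ∀ b ∈ l, k + m < b := by
        intro b hb
        rcases hg b (by simp [hb]) with h | h
        · have := hl'.1 b hb
          have : b = k := by omega
          exact (hkl (this ▸ hb)).elim
        · exact h
      have hmm : (l.map (· - m)).map (· + m) = l := by
        rw [List.map_map]
        conv_rhs => rw [← List.map_id l]
        apply List.map_congr_left
        intro b hb
        have := hbig b hb
        simp; omega
      refine ⟨l.map (· - m), ?_, ?_, ?_⟩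
      · rw [List.pairwise_map]
        exact hl'.2.imp (by intros; omega)
      · cases l with
        | nil => rfl
        | cons c l =>
          have := hbig c (by simp)
          rw [List.map_cons]
          unfold ins
          rw [if_neg (by omega), ← List.map_cons (f := (· - m)), hmm]
      · intro b hb
        obtain ⟨c, hc, rfl⟩ := List.mem_map.1 hb
        have := hbig c hc
        right
        refine ⟨by omega, ?_⟩
        have e : c - m + m = c := by omega
        simp [e, hc]

/-- sorting a positive word -/
lemma exists_sort (p : ℕ) (hp : 2 ≤ p) (h : ℕ) (l : List ℕ) (hh : ∀ a ∈ l, a ≤ h) :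
    ∃ l' : List ℕ, l'.Pairwise (· ≤ ·) ∧ val p l' = val p l ∧ l'.length = l.length ∧
      ∀ a ∈ l', a ≤ h + (p - 1) * l.length := by
  induction l using List.reverseRecOn with
  | nil => exact ⟨[], by simp, rfl, rfl, by simp⟩
  | append_singleton l k ih =>
    obtain ⟨l', h1, h2, h3, h4⟩ := ih (fun a ha => hh a (by simp [ha]))
    refine ⟨ins (p - 1) k l', sorted_ins _ _ _ h1, ?_, ?_, ?_⟩
    · rw [val_ins p hp k l' h1, h2]; simp
    · rw [length_ins, h3]; simp
    · intro a ha
      have hk := hh k (by simp)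
      have e : (p - 1) * (l ++ [k]).length = (p - 1) * l.length + (p - 1) := by
        simp [mul_add]
      rw [e]
      rw [mem_ins _ _ _ _ h1] at ha
      rcases ha with rfl | ha | ⟨c, hc, _, rfl⟩
      · omega
      · have := h4 a ha.1; omega
      · have := h4 c hc; omega

def Mon (p : ℕ) : Set (FP p) := Set.range (val p)

lemma Mon_sorted (p : ℕ) (hp : 2 ≤ p) {g : FP p} (hg : g ∈ Mon p) :
    ∃ l : List ℕ, l.Pairwise (· ≤ ·) ∧ val p l = g := by
  obtain ⟨l, rfl⟩ := hg
  obtain ⟨l', h1, h2, -⟩ := exists_sort p hp (l.sum) l (fun a ha => List.le_sum_of_mem ha)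
  exact ⟨l', h1, h2⟩

lemma divides_iff (p : ℕ) (hp : 2 ≤ p) (k : ℕ) (l : List ℕ) (hl : l.Pairwise (· ≤ ·)) :
    (∃ W ∈ Mon p, val p l = W * xg p k) ↔ k ∈ l ∧ ∀ a ∈ l, a ≤ k ∨ k + (p - 1) < a := by
  constructor
  · rintro ⟨W, hW, e⟩
    obtain ⟨w, hw, rfl⟩ := Mon_sorted p hp hW
    rw [← val_ins p hp k w hw] at e
    have := val_inj p hp _ _ hl (sorted_ins _ _ _ hw) e
    subst this
    refine ⟨(mem_ins _ _ _ _ hw).2 (Or.inl rfl), ?_⟩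
    intro a ha
    rw [mem_ins _ _ _ _ hw] at ha
    rcases ha with rfl | ha | ⟨c, hc, _, rfl⟩ <;> omega
  · rintro ⟨h1, h2⟩
    obtain ⟨w, hw, e, -⟩ := exists_preimage (p - 1) k l hl h1 h2
    exact ⟨val p w, ⟨w, rfl⟩, by rw [← val_ins p hp k w hw, e]⟩

lemma diamond_aux (p : ℕ) (hp : 2 ≤ p) {k j : ℕ} (hkj : k < j) {A B : FP p}
    (hA : A ∈ Mon p) (hB : B ∈ Mon p) (e : A * xg p k = B * xg p j) :
    ∃ W ∈ Mon p, k + (p - 1) < j ∧ A = W * xg p (j - (p - 1)) ∧ B = W * xg p k := by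
  obtain ⟨a, ha, rfl⟩ := Mon_sorted p hp hA
  have hs := sorted_ins (p - 1) k a ha
  have hv := val_ins p hp k a ha
  have h1 := (divides_iff p hp k _ hs).1 ⟨_, hA, hv⟩
  have h2 := (divides_iff p hp j _ hs).1 ⟨_, hB, hv.trans e⟩
  have hj : k + (p - 1) < j := by
    rcases h1.2 j h2.1 with h | h <;> omega
  have h3 : ∃ W ∈ Mon p, val p a = W * xg p (j - (p - 1)) := by
    rw [divides_iff p hp _ _ ha]
    constructor
    · have := h2.1
      rw [mem_ins _ _ _ _ ha] at this
      rcases this with h | h | ⟨c, hc, _, h⟩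
      · omega
      · omega
      · have : j - (p - 1) = c := by omega
        rw [this]; exact hc
    · intro c hc
      by_cases hck : c ≤ k
      · left; omega
      · have := h2.2 (c + (p - 1)) ((mem_ins _ _ _ _ ha).2
          (Or.inr (Or.inr ⟨c, hc, by omega, rfl⟩)))
        omega
  obtain ⟨W, hW, hWe⟩ := h3
  refine ⟨W, hW, hj, hWe, ?_⟩
  rw [hWe, mul_assoc, rel p hp (by omega : k < j - (p - 1)),
    show j - (p - 1) + (p - 1) = j by omega, ← mul_assoc, mul_left_inj] at e
  exact e.symm

def Step (p : ℕ) (a b : FP p × FP p) : Prop :=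
  b.1 ∈ Mon p ∧ b.2 ∈ Mon p ∧ ∃ k, a.1 = b.1 * xg p k ∧ a.2 = b.2 * xg p k

lemma step_diamond_aux (p : ℕ) (hp : 2 ≤ p) (b c : FP p × FP p) (k j : ℕ) (hkj : k < j)
    (hb1 : b.1 ∈ Mon p) (hb2 : b.2 ∈ Mon p) (hc1 : c.1 ∈ Mon p) (hc2 : c.2 ∈ Mon p)
    (e1 : b.1 * xg p k = c.1 * xg p j) (e2 : b.2 * xg p k = c.2 * xg p j) :
    ∃ d, Step p b d ∧ Step p c d := by
  obtain ⟨W, hW, _, h1, h2⟩ := diamond_aux p hp hkj hb1 hc1 e1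
  obtain ⟨W', hW', _, h1', h2'⟩ := diamond_aux p hp hkj hb2 hc2 e2
  exact ⟨(W, W'), ⟨hW, hW', _, h1, h1'⟩, ⟨hW, hW', _, h2, h2'⟩⟩

lemma step_diamond (p : ℕ) (hp : 2 ≤ p) (a b c : FP p × FP p) (hab : Step p a b)
    (hac : Step p a c) :
    ∃ d, Relation.ReflGen (Step p) b d ∧ Relation.ReflTransGen (Step p) c d := by
  obtain ⟨hb1, hb2, k, k1, k2⟩ := hab
  obtain ⟨hc1, hc2, j, j1, j2⟩ := hac
  have e1 := k1.symm.trans j1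
  have e2 := k2.symm.trans j2
  rcases lt_trichotomy k j with h | h | h
  · obtain ⟨d, h1, h2⟩ := step_diamond_aux p hp b c k j h hb1 hb2 hc1 hc2 e1 e2
    exact ⟨d, .single h1, .single h2⟩
  · subst h
    rw [mul_left_inj] at e1 e2
    have : b = c := Prod.ext e1 e2
    subst this
    exact ⟨b, .refl, .refl⟩
  · obtain ⟨d, h1, h2⟩ := step_diamond_aux p hp c b j k h hc1 hc2 hb1 hb2 e1.symm e2.symm
    exact ⟨d, .single h2, .single h1⟩

lemma steps_mul (p : ℕ) (A B : FP p) (hA : A ∈ Mon p) (hB : B ∈ Mon p) (s : List ℕ) :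
    Relation.ReflTransGen (Step p) (A * val p s, B * val p s) (A, B) := by
  induction s using List.reverseRecOn with
  | nil => simpa using Relation.ReflTransGen.refl
  | append_singleton s k ih =>
    refine Relation.ReflTransGen.head ?_ ih
    obtain ⟨a, rfl⟩ := hA
    obtain ⟨b, rfl⟩ := hB
    exact ⟨⟨a ++ s, by simp⟩, ⟨b ++ s, by simp⟩, k, by simp [mul_assoc], by simp [mul_assoc]⟩

/-! ### Ore condition with bounds -/

lemma inv_mul_val (p : ℕ) (hp : 2 ≤ p) (u : List ℕ) : ∀ (h i : ℕ), (∀ a ∈ u, a ≤ h) →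
    ∃ u' t : List ℕ, (xg p i)⁻¹ * val p u = val p u' * (val p t)⁻¹ ∧
      u'.length ≤ u.length ∧ t.length ≤ 1 ∧ (∀ a ∈ u', a ≤ h + (p - 1)) ∧
      (∀ a ∈ t, a ≤ i + (p - 1) * u.length) := by
  induction u with
  | nil =>
    intro h i _
    exact ⟨[], [i], by simp, by simp, by simp, by simp, by simp⟩
  | cons j u ih =>
    intro h i hu
    have hj := hu j (by simp)
    have hu' : ∀ a ∈ u, a ≤ h := fun a ha => hu a (by simp [ha])
    have el : (p - 1) * (j :: u).length = (p - 1) * u.length + (p - 1) := by simp [mul_add]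
    rcases lt_trichotomy i j with hij | hij | hij
    · obtain ⟨u', t, h1, h2, h3, h4, h5⟩ := ih h i hu'
      refine ⟨(j + (p - 1)) :: u', t, ?_, by simpa using h2, h3, ?_, ?_⟩
      · have := rel p hp hij
        have e : (xg p i)⁻¹ * xg p j = xg p (j + (p - 1)) * (xg p i)⁻¹ := by
          rw [inv_mul_eq_iff_eq_mul, ← mul_assoc, ← this]; group
        rw [val_cons, ← mul_assoc, e, mul_assoc, h1, val_cons, mul_assoc]
      · intro a ha
        rcases List.mem_cons.1 ha with rfl | ha
        · omega
        · exact h4 a ha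
      · intro a ha
        have := h5 a ha
        omega
    · subst hij
      refine ⟨u, [], by simp, by simp, by simp, ?_, by simp⟩
      intro a ha
      have := hu' a ha
      omega
    · obtain ⟨u', t, h1, h2, h3, h4, h5⟩ := ih h (i + (p - 1)) hu'
      refine ⟨j :: u', t, ?_, by simpa using h2, h3, ?_, ?_⟩
      · have := rel p hp hij
        have e : (xg p i)⁻¹ * xg p j = xg p j * (xg p (i + (p - 1)))⁻¹ := by
          rw [inv_mul_eq_iff_eq_mul, ← mul_assoc, this]; group
        rw [val_cons, ← mul_assoc, e, mul_assoc, h1, val_cons, mul_assoc]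
      · intro a ha
        rcases List.mem_cons.1 ha with rfl | ha
        · omega
        · exact h4 a ha
      · intro a ha
        have := h5 a ha
        omega

lemma word_frac (p : ℕ) (hp : 2 ≤ p) (w : List (FP p)) (b : ℕ)
    (hw : ∀ g ∈ w, (∃ i, i ≤ b ∧ g = xg p i) ∨ (∃ i, i ≤ b ∧ g⁻¹ = xg p i)) :
    ∃ u v : List ℕ, w.prod = val p u * (val p v)⁻¹ ∧ u.length ≤ w.length ∧
      v.length ≤ w.length ∧ (∀ a ∈ u, a ≤ b + (p - 1) * w.length) ∧
      (∀ a ∈ v, a ≤ b + (p - 1) * w.length) := by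
  induction w with
  | nil => exact ⟨[], [], by simp, by simp, by simp, by simp, by simp⟩
  | cons g w ih =>
    obtain ⟨u, v, h1, h2, h3, h4, h5⟩ := ih (fun g hg => hw g (by simp [hg]))
    have el : (p - 1) * (g :: w).length = (p - 1) * w.length + (p - 1) := by simp [mul_add]
    rw [el]
    rcases hw g (by simp) with ⟨i, hi, rfl⟩ | ⟨i, hi, hg⟩
    · refine ⟨i :: u, v, ?_, by simpa using h2, by simp; omega, ?_, ?_⟩
      · rw [List.prod_cons, h1, val_cons, mul_assoc]
      · intro a ha
        rcases List.mem_cons.1 ha with rfl | ha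
        · omega
        · have := h4 a ha; omega
      · intro a ha
        have := h5 a ha; omega
    · obtain ⟨u', t, k1, k2, k3, k4, k5⟩ := inv_mul_val p hp u _ i h4
      have hmono : (p - 1) * u.length ≤ (p - 1) * w.length := Nat.mul_le_mul_left _ h2
      refine ⟨u', v ++ t, ?_, by simp; omega, by simp; omega, ?_, ?_⟩
      · rw [List.prod_cons, h1, ← inv_inv g, hg, ← mul_assoc, k1, val_append, mul_inv_rev,
          mul_assoc]
      · intro a ha
        have := k4 a ha; omega
      · intro a ha
        rcases List.mem_append.1 ha with ha | ha
        · have := h5 a ha; omega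
        · have := k5 a ha; omega

lemma closure_xg (p : ℕ) : Subgroup.closure (Set.range (xg p)) = ⊤ :=
  PresentedGroup.closure_range_of (thompsonRels p)

lemma exists_frac (p : ℕ) (hp : 2 ≤ p) (x : FP p) :
    ∃ u v : List ℕ, x = val p u * (val p v)⁻¹ := by
  have hx : x ∈ Subgroup.closure (Set.range (xg p)) := by rw [closure_xg]; trivial
  induction hx using Subgroup.closure_induction_left with
  | one => exact ⟨[], [], by simp⟩
  | mul_left g hg y _ ih =>
    obtain ⟨i, rfl⟩ := hg
    obtain ⟨u, v, rfl⟩ := ih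
    exact ⟨i :: u, v, by simp [mul_assoc]⟩
  | inv_mul_cancel g hg y _ ih =>
    obtain ⟨i, rfl⟩ := hg
    obtain ⟨u, v, rfl⟩ := ih
    obtain ⟨u', t, h, -⟩ := inv_mul_val p hp u u.sum i (fun a ha => List.le_sum_of_mem ha)
    exact ⟨u', v ++ t, by rw [← mul_assoc, h]; simp [mul_assoc]⟩

/-- `(U, V)` has no common right divisor. -/
def Reduced (p : ℕ) (U V : FP p) : Prop :=
  ∀ k, ¬ ((∃ W ∈ Mon p, U = W * xg p k) ∧ (∃ W ∈ Mon p, V = W * xg p k))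

lemma reduced_unique (p : ℕ) (hp : 2 ≤ p) (U V P Q : FP p) (hU : U ∈ Mon p) (hV : V ∈ Mon p)
    (hP : P ∈ Mon p) (hQ : Q ∈ Mon p) (hr : Reduced p U V) (e : U * V⁻¹ = P * Q⁻¹) :
    Relation.ReflTransGen (Step p) (P, Q) (U, V) := by
  obtain ⟨r, s, h⟩ := exists_frac p hp (U⁻¹ * P)
  have h1 : P * val p s = U * val p r := by
    rw [inv_mul_eq_iff_eq_mul] at h
    rw [h]; group
  have h2 : Q * val p s = V * val p r := by
    have : Q = V * U⁻¹ * P := by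
      rw [← inv_inj] at e
      simp only [mul_inv_rev, inv_inv] at e
      rw [e]; group
    rw [this, mul_assoc, h1]; group
  have s1 := steps_mul p P Q hP hQ s
  have s2 := steps_mul p U V hU hV r
  rw [h1, h2] at s1
  obtain ⟨d, d1, d2⟩ := Relation.church_rosser (step_diamond p hp) s1 s2
  rcases Relation.ReflTransGen.cases_head d2 with h | ⟨c, hc, -⟩
  · rw [← h] at d1; exact d1
  · obtain ⟨c1, c2, k, k1, k2⟩ := hc
    exact (hr k ⟨⟨_, c1, k1⟩, ⟨_, c2, k2⟩⟩).elim

def Bd (p n h : ℕ) (g : FP p) : Prop :=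
  ∃ l : List ℕ, l.Pairwise (· ≤ ·) ∧ val p l = g ∧ l.length ≤ n ∧ ∀ a ∈ l, a ≤ h

lemma Bd_div (p : ℕ) (hp : 2 ≤ p) (n h k : ℕ) (g : FP p) (hg : g ∈ Mon p)
    (hb : Bd p n h (g * xg p k)) : Bd p n h g := by
  obtain ⟨l, hl, rfl⟩ := Mon_sorted p hp hg
  obtain ⟨l', h1, h2, h3, h4⟩ := hb
  rw [← val_ins p hp k l hl] at h2
  have := val_inj p hp _ _ h1 (sorted_ins _ _ _ hl) h2
  subst this
  rw [length_ins] at h3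
  refine ⟨l, hl, rfl, by omega, ?_⟩
  intro a ha
  by_cases hk : a ≤ k
  · exact h4 a ((mem_ins _ _ _ _ hl).2 (Or.inr (Or.inl ⟨ha, hk⟩)))
  · have := h4 (a + (p - 1)) ((mem_ins _ _ _ _ hl).2
      (Or.inr (Or.inr ⟨a, ha, by omega, rfl⟩)))
    omega

lemma Bd_steps (p : ℕ) (hp : 2 ≤ p) (n h : ℕ) (a b : FP p × FP p)
    (hab : Relation.ReflTransGen (Step p) a b) (h1 : Bd p n h a.1) (h2 : Bd p n h a.2) :
    Bd p n h b.1 ∧ Bd p n h b.2 := by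
  induction hab with
  | refl => exact ⟨h1, h2⟩
  | tail _ hs ih =>
    obtain ⟨c1, c2, k, k1, k2⟩ := hs
    rw [k1, k2] at ih
    exact ⟨Bd_div p hp n h k _ c1 ih.1, Bd_div p hp n h k _ c2 ih.2⟩

lemma exists_reduced (p : ℕ) (hp : 2 ≤ p) (x : FP p) :
    ∃ u v : List ℕ, u.Pairwise (· ≤ ·) ∧ v.Pairwise (· ≤ ·) ∧ x = val p u * (val p v)⁻¹ ∧
      Reduced p (val p u) (val p v) := by
  have key : ∀ n : ℕ, ∀ u v : List ℕ, u.length = n → x = val p u * (val p v)⁻¹ →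
      ∃ u v : List ℕ, u.Pairwise (· ≤ ·) ∧ v.Pairwise (· ≤ ·) ∧
        x = val p u * (val p v)⁻¹ ∧ Reduced p (val p u) (val p v) := by
    intro n
    induction n with
    | zero =>
      intro u v hu hx
      obtain rfl := List.length_eq_zero_iff.1 hu
      obtain ⟨v', h1, h2⟩ := Mon_sorted p hp (g := val p v) ⟨v, rfl⟩
      refine ⟨[], v', by simp, h1, by rw [h2]; exact hx, ?_⟩
      rintro k ⟨h, -⟩
      have := (divides_iff p hp k [] (by simp)).1 h
      simp at this
    | succ n ih =>
      intro u v hu hx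
      obtain ⟨u', h1, h2, h3, -⟩ := exists_sort p hp u.sum u (fun a ha => List.le_sum_of_mem ha)
      obtain ⟨v', h1', h2'⟩ := Mon_sorted p hp (g := val p v) ⟨v, rfl⟩
      by_cases hr : Reduced p (val p u') (val p v')
      · exact ⟨u', v', h1, h1', by rw [h2, h2']; exact hx, hr⟩
      · unfold Reduced at hr
        push Not at hr
        obtain ⟨k, ⟨W, hW, e⟩, ⟨W', ⟨w', rfl⟩, e'⟩⟩ := hr
        obtain ⟨w, hw, rfl⟩ := Mon_sorted p hp hW
        have e2 := e
        rw [← val_ins p hp k w hw] at e2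
        have e3 := val_inj p hp _ _ h1 (sorted_ins _ _ _ hw) e2
        have e4 := congrArg List.length e3
        rw [length_ins] at e4
        refine ih w w' (by omega) ?_
        rw [hx, ← h2, ← h2', e, e']; group
  obtain ⟨u, v, h⟩ := exists_frac p hp x
  exact key _ u v rfl h

/-! ### Word length -/

lemma wordLength_le {G : Type*} [Group G] (S : Set G) (w : List G)
    (hw : ∀ g ∈ w, g ∈ S ∨ g⁻¹ ∈ S) : wordLength S w.prod ≤ w.length :=
  Nat.sInf_le ⟨w, rfl, hw, rfl⟩

def gens (p : ℕ) : Set (FP p) := { g : FP p | ∃ i, i < p ∧ g = xg p i }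

/-- `g` has a word of length at most `n`. -/
def Len (p n : ℕ) (g : FP p) : Prop :=
  ∃ w : List (FP p), w.length ≤ n ∧ (∀ g ∈ w, g ∈ gens p ∨ g⁻¹ ∈ gens p) ∧ w.prod = g

lemma Len.mul {p n n' : ℕ} {g g' : FP p} (h : Len p n g) (h' : Len p n' g') :
    Len p (n + n') (g * g') := by
  obtain ⟨w, h1, h2, rfl⟩ := h
  obtain ⟨w', h1', h2', rfl⟩ := h'
  refine ⟨w ++ w', by simp; omega, ?_, by simp⟩
  intro g hg
  rcases List.mem_append.1 hg with hg | hg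
  · exact h2 g hg
  · exact h2' g hg

lemma Len.inv {p n : ℕ} {g : FP p} (h : Len p n g) : Len p n g⁻¹ := by
  obtain ⟨w, h1, h2, rfl⟩ := h
  refine ⟨(w.map (·⁻¹)).reverse, by simpa using h1, ?_, by rw [List.prod_inv_reverse]⟩
  intro g hg
  rw [List.mem_reverse, List.mem_map] at hg
  obtain ⟨c, hc, rfl⟩ := hg
  rw [inv_inv]
  exact (h2 c hc).symm

lemma Len.mono {p n n' : ℕ} {g : FP p} (h : Len p n g) (hn : n ≤ n') : Len p n' g := by
  obtain ⟨w, h1, h2⟩ := h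
  exact ⟨w, h1.trans hn, h2⟩

lemma Len_gen {p i : ℕ} (h : i < p) : Len p 1 (xg p i) :=
  ⟨[xg p i], by simp, by simpa using Or.inl ⟨i, h, rfl⟩, by simp⟩

lemma Len_one {p : ℕ} : Len p 0 (1 : FP p) := ⟨[], by simp, by simp, by simp⟩

lemma Len.wlen_le {p n : ℕ} {g : FP p} (h : Len p n g) : wlen p g ≤ n := by
  obtain ⟨w, h1, h2, rfl⟩ := h
  exact (wordLength_le _ w h2).trans h1

lemma Len_val (p : ℕ) (hp : 2 ≤ p) : ∀ (h : ℕ) (l : List ℕ), l.Pairwise (· ≤ ·) →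
    (∀ a ∈ l, a ≤ h) → Len p (l.length + 2 * h) (val p l) := by
  intro h
  induction h using Nat.strong_induction_on with
  | _ h IH =>
    intro l
    induction l with
    | nil => intro _ _; exact Len_one.mono (by simp)
    | cons a l ih =>
      intro hl hh
      have hl' := List.pairwise_cons.1 hl
      by_cases ha : a ≤ p - 1
      · have := (Len_gen (p := p) (i := a) (by omega)).mul
          (ih hl'.2 (fun b hb => hh b (by simp [hb])))
        rw [val_cons]
        exact this.mono (by simp; omega)
      · have hbig : ∀ b ∈ a :: l, p - 1 < b := by
          intro b hb
          rcases List.mem_cons.1 hb with rfl | hb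
          · omega
          · have := hl'.1 b hb; omega
        have hah := hh a (by simp)
        set L := a :: l with hL
        have hmm : (L.map (· - (p - 1))).map (· + (p - 1)) = L := by
          rw [List.map_map]
          conv_rhs => rw [← List.map_id L]
          apply List.map_congr_left
          intro b hb
          have := hbig b hb
          simp; omega
        have hsh := val_shift p hp 0 (L.map (· - (p - 1))) (by
          intro b hb
          obtain ⟨c, hc, rfl⟩ := List.mem_map.1 hb
          have := hbig c hc
          omega)
        rw [hmm] at hsh
        have hrec := IH (h - (p - 1)) (by omega) (L.map (· - (p - 1)))
          (by rw [List.pairwise_map]; exact hl.imp (by intros; omega))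
          (by
            intro b hb
            obtain ⟨c, hc, rfl⟩ := List.mem_map.1 hb
            have := hh c hc
            omega)
        have e : val p L = (xg p 0)⁻¹ * val p (L.map (· - (p - 1))) * xg p 0 := by
          rw [mul_assoc, hsh]; group
        have h0 := Len_gen (p := p) (i := 0) (by omega)
        rw [e]
        refine ((h0.inv.mul hrec).mul h0).mono ?_
        rw [List.length_map]
        omega

lemma exists_word (p : ℕ) (hp : 2 ≤ p) (x : FP p) :
    ∃ w : List (FP p), w.length = wlen p x ∧ (∀ g ∈ w, g ∈ gens p ∨ g⁻¹ ∈ gens p) ∧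
      w.prod = x := by
  obtain ⟨u, v, hu, hv, hx, -⟩ := exists_reduced p hp x
  have h := (Len_val p hp u.sum u hu (fun a ha => List.le_sum_of_mem ha)).mul
    (Len_val p hp v.sum v hv (fun a ha => List.le_sum_of_mem ha)).inv
  rw [← hx] at h
  obtain ⟨w, -, hw, hw'⟩ := h
  exact Nat.sInf_mem (s := { n : ℕ | ∃ w : List (FP p), w.length = n ∧
    (∀ g ∈ w, g ∈ gens p ∨ g⁻¹ ∈ gens p) ∧ w.prod = x }) ⟨w.length, w, rfl, hw, hw'⟩

lemma lower (p q d : ℕ) (hp : 2 ≤ p) (hq : 2 ≤ q) (hd : 1 ≤ d)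
    (hpq : q - 1 = d * (p - 1)) (j1 : FP p →* FP q)
    (hj : ∀ i : ℕ, j1 (xg p i) = xg q (d * i)) (x : FP p) :
    wlen p x ≤ (2 + 12 * q) * wlen q (j1 x) := by
  have hval : ∀ l : List ℕ, j1 (val p l) = val q (l.map (d * ·)) := by
    intro l
    induction l with
    | nil => simp
    | cons a l ih => simp [ih, hj]
  have hsort : ∀ l : List ℕ, l.Pairwise (· ≤ ·) → (l.map (d * ·)).Pairwise (· ≤ ·) := by
    intro l hl
    rw [List.pairwise_map]
    exact hl.imp (fun h => Nat.mul_le_mul_left _ h)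
  obtain ⟨w, hw1, hw2, hw3⟩ := exists_word q hq (j1 x)
  set N := wlen q (j1 x) with hN
  obtain ⟨P, Q, e, hP1, hQ1, hP2, hQ2⟩ := word_frac q hq w q (by
    intro g hg
    rcases hw2 g hg with ⟨i, hi, h⟩ | ⟨i, hi, h⟩
    · exact Or.inl ⟨i, hi.le, h⟩
    · exact Or.inr ⟨i, hi.le, h⟩)
  rw [hw1] at hP1 hQ1 hP2 hQ2
  have bd : ∀ l : List ℕ, l.length ≤ N → (∀ a ∈ l, a ≤ q + (q - 1) * N) →
      Bd q N (q + 2 * (q - 1) * N) (val q l) := by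
    intro l h1 h2
    obtain ⟨l', k1, k2, k3, k4⟩ := exists_sort q hq _ l h2
    refine ⟨l', k1, k2, by omega, ?_⟩
    intro a ha
    have := k4 a ha
    have h5 : (q - 1) * l.length ≤ (q - 1) * N := Nat.mul_le_mul_left _ h1
    have h6 : 2 * (q - 1) * N = (q - 1) * N + (q - 1) * N := by ring
    omega
  obtain ⟨u, v, hu, hv, hx, hr⟩ := exists_reduced p hp x
  have hr' : Reduced q (val q (u.map (d * ·))) (val q (v.map (d * ·))) := by
    rintro k ⟨h1, h2⟩
    rw [divides_iff q hq k _ (hsort u hu)] at h1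
    rw [divides_iff q hq k _ (hsort v hv)] at h2
    obtain ⟨k', hk', rfl⟩ := List.mem_map.1 h1.1
    have gap : ∀ l : List ℕ, (d * k' ∈ l.map (d * ·) ∧
        ∀ a ∈ l.map (d * ·), a ≤ d * k' ∨ d * k' + (q - 1) < a) →
        (k' ∈ l ∧ ∀ a ∈ l, a ≤ k' ∨ k' + (p - 1) < a) := by
      rintro l ⟨g1, g2⟩
      constructor
      · obtain ⟨c, hc, e⟩ := List.mem_map.1 g1
        have : c = k' := Nat.eq_of_mul_eq_mul_left (by omega : 0 < d) e
        exact this ▸ hc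
      · intro a ha
        rcases g2 (d * a) (List.mem_map.2 ⟨a, ha, rfl⟩) with h | h
        · exact Or.inl (Nat.le_of_mul_le_mul_left h (by omega))
        · rw [hpq, ← mul_add] at h
          exact Or.inr (Nat.lt_of_mul_lt_mul_left h)
    exact hr k' ⟨(divides_iff p hp k' u hu).2 (gap u h1),
      (divides_iff p hp k' v hv).2 (gap v h2)⟩
  have steps := reduced_unique q hq _ _ (val q P) (val q Q) ⟨_, rfl⟩ ⟨_, rfl⟩ ⟨_, rfl⟩ ⟨_, rfl⟩
    hr' (by rw [← e, hw3, hx, map_mul, map_inv, hval, hval])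
  obtain ⟨bu, bv⟩ := Bd_steps q hq N (q + 2 * (q - 1) * N) _ _ steps (bd P hP1 hP2) (bd Q hQ1 hQ2)
  have fin : ∀ l : List ℕ, l.Pairwise (· ≤ ·) →
      Bd q N (q + 2 * (q - 1) * N) (val q (l.map (d * ·))) →
      Len p ((1 + 6 * q) * N) (val p l) := by
    rintro l hl ⟨l', k1, k2, k3, k4⟩
    have := val_inj q hq _ _ k1 (hsort l hl) k2
    subst this
    rw [List.length_map] at k3
    rcases Nat.eq_zero_or_pos N with h0 | h0
    · have : l = [] := List.length_eq_zero_iff.1 (by omega)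
      subst this
      exact Len_one.mono (by omega)
    · refine (Len_val p hp (q + 2 * (q - 1) * N) l hl ?_).mono ?_
      · intro a ha
        have := k4 (d * a) (List.mem_map.2 ⟨a, ha, rfl⟩)
        nlinarith
      · have h7 : q - 1 ≤ q := by omega
        have h8 : (q - 1) * N ≤ q * N := Nat.mul_le_mul_right _ h7
        nlinarith
  have := ((fin u hu bu).mul (fin v hv bv).inv).wlen_le
  rw [← hx] at this
  calc wlen p x ≤ _ := this
    _ = (2 + 12 * q) * N := by ring

end Thompson

open Thompson

/-- Proposition 8. If `q - 1 = d(p - 1)`, the assignment `x_i ↦ x_{d·i}`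
determines a group homomorphism `j₁ : F(p) → F(q)` which is a quasi-isometric embedding. -/
theorem statement4 (p q d : ℕ) (hp : 2 ≤ p) (hq : 2 ≤ q) (hd : 1 ≤ d)
    (hpq : q - 1 = d * (p - 1)) :
    ∃ j1 : FP p →* FP q, (∀ i : ℕ, j1 (xg p i) = xg q (d * i)) ∧
      Function.Injective j1 ∧
      ∃ C : ℝ, 1 ≤ C ∧ ∀ x : FP p,
        (1 / C) * (wlen p x : ℝ) ≤ (wlen q (j1 x) : ℝ) ∧
          (wlen q (j1 x) : ℝ) ≤ C * (wlen p x : ℝ) := by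
  obtain ⟨j1, hj⟩ := exists_lift p hp (fun i => xg q (d * i)) (by
    intro i j hij
    have := rel q hq (Nat.mul_lt_mul_of_pos_left hij (by omega : 0 < d))
    rw [this, mul_add, hpq])
  have hlow := lower p q d hp hq hd hpq j1 hj
  refine ⟨j1, hj, ?_, 2 + 12 * (q : ℝ), ?_, ?_⟩
  · rw [injective_iff_map_eq_one]
    intro x hx
    have h := hlow x
    rw [hx] at h
    have h0 : wlen q (1 : FP q) ≤ 0 := Len_one.wlen_le
    have h1 : wlen p x = 0 := by
      have : wlen q (1 : FP q) = 0 := by omega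
      rw [this] at h; omega
    obtain ⟨w, hw, -, rfl⟩ := exists_word p hp x
    rw [h1] at hw
    rw [List.length_eq_zero_iff.1 hw]; rfl
  · have : (0 : ℝ) ≤ q := Nat.cast_nonneg q
    linarith
  · intro x
    have hq0 : (0 : ℝ) ≤ q := Nat.cast_nonneg q
    constructor
    · have h : (wlen p x : ℝ) ≤ (2 + 12 * q) * wlen q (j1 x) := by exact_mod_cast hlow x
      rw [one_div, inv_mul_le_iff₀ (by linarith)]
      exact h
    · have h : wlen q (j1 x) ≤ wlen p x := by
        obtain ⟨w, hw1, hw2, hw3⟩ := exists_word p hp x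
        apply Len.wlen_le
        refine ⟨w.map j1, by simp [hw1], ?_, by rw [← hw3, map_list_prod]⟩
        have hlt : ∀ i, i < p → d * i < q := by
          intro i hi
          have : d * i ≤ d * (p - 1) := Nat.mul_le_mul_left _ (by omega)
          omega
        intro g hg
        obtain ⟨c, hc, rfl⟩ := List.mem_map.1 hg
        rcases hw2 c hc with ⟨i, hi, h⟩ | ⟨i, hi, h⟩
        · exact Or.inl ⟨d * i, hlt i hi, by rw [h, hj]⟩
        · exact Or.inr ⟨d * i, hlt i hi, by rw [← map_inv, h, hj]⟩
      have h' : (wlen q (j1 x) : ℝ) ≤ wlen p x := by exact_mod_cast h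
      have : (0 : ℝ) ≤ wlen p x := Nat.cast_nonneg _
      nlinarith
end

section
/- Let p, q ≥ 2 with q − 1 = d(p − 1) for an integer d ≥ 1. The assignment x_i ↦ x_i^d preserves the defining relations and hence determines a group homomorphism j₂ : F(q) → F(p), and j₂ is a quasi-isometric embedding: there is a constant C ≥ 1 such that for all x ∈ F(q), (1/C)·|x|_q ≤ |j₂(x)|_p ≤ C·|x|_q. -/
open scoped BigOperators

section Helpers

lemma xg_rel {p i j : ℕ} (hp : 2 ≤ p) (h : i < j) :
    xg p j * xg p i = xg p i * xg p (j + (p - 1)) := by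
  have h1 : (PresentedGroup.mk (thompsonRels p)) ((FreeGroup.of i)⁻¹ * FreeGroup.of j *
      FreeGroup.of i * (FreeGroup.of (j + p - 1))⁻¹) = 1 :=
    PresentedGroup.one_of_mem ⟨i, j, h, rfl⟩
  rw [show j + p - 1 = j + (p - 1) by omega] at h1
  have h2 : (xg p i)⁻¹ * xg p j * xg p i * (xg p (j + (p - 1)))⁻¹ = 1 := by
    simp only [map_mul, map_inv] at h1
    exact h1
  have h3 := mul_inv_eq_one.mp h2
  rw [← h3]; group

/-- Any homomorphism-type data respecting the relations extends to `F(p)`. -/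
lemma exists_hom {p : ℕ} (hp : 2 ≤ p) {G : Type*} [Group G] (f : ℕ → G)
    (hf : ∀ i j, i < j → f j * f i = f i * f (j + (p - 1))) :
    ∃ φ : FP p →* G, ∀ i, φ (xg p i) = f i := by
  have h : ∀ r ∈ thompsonRels p, FreeGroup.lift f r = 1 := by
    rintro r ⟨i, j, hij, rfl⟩
    rw [show j + p - 1 = j + (p - 1) by omega]
    simp only [map_mul, map_inv, FreeGroup.lift_apply_of]
    rw [mul_inv_eq_one, mul_assoc, hf i j hij]; group
  exact ⟨PresentedGroup.toGroup h, fun i => PresentedGroup.toGroup.of h⟩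

lemma FP_induction {p : ℕ} {P : FP p → Prop} (h1 : P 1) (hx : ∀ i, P (xg p i))
    (hm : ∀ a b, P a → P b → P (a * b)) (hi : ∀ a, P a → P a⁻¹) (g : FP p) : P g := by
  have key : ∀ w : FreeGroup ℕ, P ((PresentedGroup.mk (thompsonRels p)) w) := by
    intro w
    induction w using FreeGroup.induction_on with
    | C1 => exact h1
    | of i => exact hx i
    | inv_of i _ => exact hi _ (hx i)
    | mul a b ha hb => exact hm _ _ ha hb
  obtain ⟨w, rfl⟩ := PresentedGroup.mk_surjective (thompsonRels p) g
  exact key w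

lemma xg_pow_comm {p i j : ℕ} (hp : 2 ≤ p) (h : i < j) (n : ℕ) :
    xg p j * xg p i ^ n = xg p i ^ n * xg p (j + n * (p - 1)) := by
  induction n with
  | zero => simp
  | succ n ih =>
    rw [pow_succ, ← mul_assoc, ih, mul_assoc, xg_rel hp (by omega), mul_assoc]
    congr 3; ring

/-- conjugation form on powers -/
lemma pow_conj {G : Type*} [Group G] {a b c : G} (h : a * c = c * b) (n : ℕ) :
    a ^ n * c = c * b ^ n := by
  have h' : SemiconjBy c b a := h.symm
  exact (h'.pow_right n).symm

/-! ### Word length -/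

/-- `g` is a product of at most `n` generators or inverses. -/
def WL (p n : ℕ) (g : FP p) : Prop :=
  ∃ w : List (FP p), w.length ≤ n ∧
    (∀ g ∈ w, g ∈ { g : FP p | ∃ i, i < p ∧ g = xg p i } ∨
      g⁻¹ ∈ { g : FP p | ∃ i, i < p ∧ g = xg p i }) ∧ w.prod = g

lemma WL.wlen_le {p n : ℕ} {g : FP p} (h : WL p n g) : wlen p g ≤ n := by
  obtain ⟨w, hw, h1, h2⟩ := h
  refine le_trans ?_ hw
  unfold wlen wordLength
  exact Nat.sInf_le ⟨w, rfl, h1, h2⟩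

lemma WL.mono {p n m : ℕ} {g : FP p} (h : WL p n g) (hm : n ≤ m) : WL p m g := by
  obtain ⟨w, hw, h1, h2⟩ := h
  exact ⟨w, hw.trans hm, h1, h2⟩

lemma WL.one (p : ℕ) : WL p 0 1 := ⟨[], by simp, by simp, by simp⟩

lemma WL.gen {p i : ℕ} (h : i < p) : WL p 1 (xg p i) :=
  ⟨[xg p i], by simp, by intro g hg; simp at hg; left; exact ⟨i, h, hg⟩, by simp⟩

lemma WL.mul {p n m : ℕ} {g h : FP p} (hg : WL p n g) (hh : WL p m h) :
    WL p (n + m) (g * h) := by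
  obtain ⟨w, hw, h1, h2⟩ := hg
  obtain ⟨w', hw', h1', h2'⟩ := hh
  refine ⟨w ++ w', by simp; omega, ?_, by simp [h2, h2']⟩
  intro g hg
  rcases List.mem_append.mp hg with h | h
  · exact h1 g h
  · exact h1' g h

lemma WL.inv {p n : ℕ} {g : FP p} (hg : WL p n g) : WL p n g⁻¹ := by
  obtain ⟨w, hw, h1, h2⟩ := hg
  refine ⟨(w.map (·⁻¹)).reverse, by simpa using hw, ?_, by rw [← h2, List.prod_inv_reverse]⟩
  intro g hg
  simp only [List.mem_reverse, List.mem_map] at hg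
  obtain ⟨a, ha, rfl⟩ := hg
  rw [inv_inv]
  exact (h1 a ha).symm

lemma WL.pow {p n : ℕ} {g : FP p} (hg : WL p n g) (k : ℕ) : WL p (k * n) (g ^ k) := by
  induction k with
  | zero => simpa using WL.one p
  | succ k ih => rw [pow_succ, Nat.succ_mul]; exact ih.mul hg

/-- The positive word attached to a list of indices. -/
def wd (p : ℕ) (l : List ℕ) : FP p := (l.map (xg p)).prod

@[simp] lemma wd_nil (p : ℕ) : wd p [] = 1 := rfl
@[simp] lemma wd_cons (p i : ℕ) (l : List ℕ) : wd p (i :: l) = xg p i * wd p l := by simp [wd]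
@[simp] lemma wd_append (p : ℕ) (l l' : List ℕ) : wd p (l ++ l') = wd p l * wd p l' := by
  simp [wd]

/-- Insert a letter in a sorted positive word. -/
def ins (p i : ℕ) : List ℕ → List ℕ
  | [] => [i]
  | j :: l => if i ≤ j then i :: j :: l else j :: ins p (i + (p - 1)) l

lemma wd_ins {p : ℕ} (hp : 2 ≤ p) (i : ℕ) (l : List ℕ) :
    wd p (ins p i l) = xg p i * wd p l := by
  induction l generalizing i with
  | nil => simp [ins]
  | cons j l ih =>
    rw [ins]; split_ifs with h
    · simp
    · rw [wd_cons, ih, wd_cons, ← mul_assoc, ← mul_assoc,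
        xg_rel hp (show j < i by omega)]

lemma length_ins (p i : ℕ) (l : List ℕ) : (ins p i l).length = l.length + 1 := by
  induction l generalizing i with
  | nil => simp [ins]
  | cons j l ih =>
    rw [ins]; split_ifs with h
    · simp
    · simp [ih]

lemma mem_ins (p i : ℕ) (l : List ℕ) : ∀ a ∈ ins p i l,
    a ∈ l ∨ (i ≤ a ∧ a ≤ i + l.length * (p - 1)) := by
  induction l generalizing i with
  | nil => simp [ins]
  | cons j l ih =>
    intro a ha
    rw [ins] at ha; split_ifs at ha with h
    · rcases List.mem_cons.mp ha with rfl | ha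
      · right; constructor <;> omega
      · left; exact ha
    · rcases List.mem_cons.mp ha with rfl | ha
      · left; simp
      · rcases ih _ a ha with h | h
        · left; simp [h]
        · right
          rw [List.length_cons, Nat.succ_mul]; omega

lemma sorted_ins (p i : ℕ) (l : List ℕ) (hl : l.Pairwise (· ≤ ·)) :
    (ins p i l).Pairwise (· ≤ ·) := by
  induction l generalizing i with
  | nil => simp [ins]
  | cons j l ih =>
    rw [List.pairwise_cons] at hl
    rw [ins]; split_ifs with h
    · rw [List.pairwise_cons]
      refine ⟨?_, List.pairwise_cons.mpr hl⟩
      intro a ha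
      rcases List.mem_cons.mp ha with rfl | ha
      · exact h
      · exact h.trans (hl.1 a ha)
    · rw [List.pairwise_cons]
      refine ⟨?_, ih _ hl.2⟩
      intro a ha
      rcases mem_ins _ _ _ a ha with h' | h'
      · exact hl.1 a h'
      · omega

lemma exists_sorted {p : ℕ} (hp : 2 ≤ p) (m : ℕ) (l : List ℕ) (hm : ∀ i ∈ l, i ≤ m) :
    ∃ l' : List ℕ, l'.Pairwise (· ≤ ·) ∧ l'.length = l.length ∧ wd p l' = wd p l ∧
      ∀ i ∈ l', i ≤ m + l.length * (p - 1) := by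
  induction l with
  | nil => exact ⟨[], by simp⟩
  | cons j l ih =>
    obtain ⟨l', h1, h2, h3, h4⟩ := ih (fun i hi => hm i (by simp [hi]))
    refine ⟨ins p j l', sorted_ins _ _ _ h1, by rw [length_ins, h2]; simp,
      by rw [wd_ins hp, h3, wd_cons], ?_⟩
    intro a ha
    have hj := hm j (by simp)
    rw [List.length_cons, Nat.succ_mul]
    rcases mem_ins _ _ _ a ha with h | h
    · have := h4 a h; omega
    · rw [h2] at h; omega

lemma xg_decomp {p : ℕ} (hp : 2 ≤ p) (i : ℕ) : ∃ ρ < p,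
    xg p 0 ^ ((i - 1) / (p - 1)) * xg p i = xg p ρ * xg p 0 ^ ((i - 1) / (p - 1)) := by
  rcases Nat.eq_zero_or_pos i with rfl | hi
  · exact ⟨0, by omega, by simp⟩
  · refine ⟨1 + (i - 1) % (p - 1), ?_, ?_⟩
    · have := Nat.mod_lt (i - 1) (show 0 < p - 1 by omega)
      omega
    · rw [xg_pow_comm hp (by omega)]
      congr 2
      have := Nat.mod_add_div' (i - 1) (p - 1)
      omega

lemma WL_sorted {p : ℕ} (hp : 2 ≤ p) (K : ℕ) (l : List ℕ) (hl : l.Pairwise (· ≤ ·))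
    (hK : ∀ i ∈ l, (i - 1) / (p - 1) ≤ K) (k : ℕ) (hkK : k ≤ K)
    (hk : ∀ i ∈ l, k ≤ (i - 1) / (p - 1)) :
    WL p (l.length + 2 * K - k) (xg p 0 ^ k * wd p l) := by
  induction l generalizing k with
  | nil =>
    simp only [wd_nil, mul_one]
    exact ((WL.gen (by omega)).pow k).mono (by simp; omega)
  | cons i l ih =>
    rw [List.pairwise_cons] at hl
    obtain ⟨ρ, hρ, h⟩ := xg_decomp hp i
    set κ := (i - 1) / (p - 1) with hκ
    have hkκ : k ≤ κ := hk i (by simp)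
    have hκK : κ ≤ K := hK i (by simp)
    have h1 := ih hl.2 (fun a ha => hK a (by simp [ha])) κ hκK
      (fun a ha => Nat.div_le_div_right (by have := hl.1 a ha; omega))
    have e : xg p 0 ^ k * wd p (i :: l) =
        (xg p 0 ^ (κ - k))⁻¹ * (xg p ρ * (xg p 0 ^ κ * wd p l)) := by
      rw [← mul_assoc (xg p ρ), ← h, wd_cons, eq_inv_mul_iff_mul_eq, ← mul_assoc, ← mul_assoc,
        ← pow_add]
      congr 3; omega
    rw [e]
    refine (((WL.gen (by omega)).pow (κ - k)).inv.mul ((WL.gen hρ).mul h1)).mono ?_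
    rw [List.length_cons]; omega

lemma WL_wd {p : ℕ} (hp : 2 ≤ p) (n m : ℕ) (l : List ℕ) (hn : l.length ≤ n)
    (hm : ∀ i ∈ l, i ≤ m) : WL p ((2 * p + 1) * (n + m)) (wd p l) := by
  obtain ⟨l', h1, h2, h3, h4⟩ := exists_sorted hp m l hm
  have := WL_sorted hp (m + l.length * (p - 1)) l' h1
    (fun i hi => (Nat.div_le_self _ _).trans ((Nat.sub_le _ _).trans (h4 i hi))) 0
    (Nat.zero_le _) (fun _ _ => Nat.zero_le _)
  rw [pow_zero, one_mul, h3, h2] at this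
  refine this.mono ?_
  have h5 : l.length * (p - 1) ≤ n * p := Nat.mul_le_mul hn (by omega)
  have h6 : 0 ≤ p * m := Nat.zero_le _
  nlinarith [Nat.sub_le (l.length + 2 * (m + l.length * (p - 1))) 0]

lemma exists_WL {p : ℕ} (hp : 2 ≤ p) (g : FP p) : ∃ n, WL p n g := by
  induction g using FP_induction with
  | h1 => exact ⟨0, WL.one p⟩
  | hx i =>
    have := WL_wd hp 1 i [i] (by simp) (by simp)
    simp only [wd_cons, wd_nil, mul_one] at this
    exact ⟨_, this⟩
  | hm a b ha hb =>
    obtain ⟨n, hn⟩ := ha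
    obtain ⟨m, hm⟩ := hb
    exact ⟨_, hn.mul hm⟩
  | hi a ha =>
    obtain ⟨n, hn⟩ := ha
    exact ⟨_, hn.inv⟩

lemma WL_wlen {p : ℕ} (hp : 2 ≤ p) (g : FP p) : WL p (wlen p g) g := by
  obtain ⟨n, w, h0, h1, h2⟩ := exists_WL hp g
  obtain ⟨w, h0, h1, h2⟩ := Nat.sInf_mem (s := { n : ℕ | ∃ w : List (FP p), w.length = n ∧
    (∀ g ∈ w, g ∈ { g : FP p | ∃ i, i < p ∧ g = xg p i } ∨
      g⁻¹ ∈ { g : FP p | ∃ i, i < p ∧ g = xg p i }) ∧ w.prod = g }) ⟨_, w, rfl, h1, h2⟩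
  exact ⟨w, h0.le, h1, h2⟩

/-! ### Fractions -/

lemma inv_push {p : ℕ} (hp : 2 ≤ p) (i : ℕ) (m : ℕ) (l : List ℕ) (hm : ∀ a ∈ l, a ≤ m) :
    ∃ l' t : List ℕ, (xg p i)⁻¹ * wd p l = wd p l' * (wd p t)⁻¹ ∧ l'.length ≤ l.length ∧
      (∀ a ∈ l', a ≤ m + (p - 1)) ∧ t.length ≤ 1 ∧
      ∀ a ∈ t, a ≤ i + l.length * (p - 1) := by
  induction l generalizing i with
  | nil => exact ⟨[], [i], by simp⟩
  | cons j l ih =>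
    have hm' : ∀ a ∈ l, a ≤ m := fun a ha => hm a (by simp [ha])
    have hj : j ≤ m := hm j (by simp)
    rcases lt_trichotomy i j with h | h | h
    · obtain ⟨l', t, h1, h2, h3, h4, h5⟩ := ih i hm'
      refine ⟨(j + (p - 1)) :: l', t, ?_, by simpa using h2, ?_, h4, ?_⟩
      · rw [wd_cons, wd_cons, mul_assoc, ← h1, inv_mul_eq_iff_eq_mul, ← mul_assoc, ← mul_assoc,
          ← xg_rel hp h]
        group
      · intro a ha
        rcases List.mem_cons.mp ha with rfl | ha
        · omega
        · exact h3 a ha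
      · intro a ha
        have := h5 a ha
        rw [List.length_cons, Nat.succ_mul]; omega
    · subst h
      refine ⟨l, [], by simp, by simp, ?_, by simp, by simp⟩
      intro a ha
      have := hm' a ha
      omega
    · obtain ⟨l', t, h1, h2, h3, h4, h5⟩ := ih (i + (p - 1)) hm'
      refine ⟨j :: l', t, ?_, by simpa using h2, ?_, h4, ?_⟩
      · rw [wd_cons, wd_cons, mul_assoc, ← h1, inv_mul_eq_iff_eq_mul, ← mul_assoc, ← mul_assoc,
          xg_rel hp h]
        group
      · intro a ha
        rcases List.mem_cons.mp ha with rfl | ha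
        · omega
        · exact h3 a ha
      · intro a ha
        have := h5 a ha
        rw [List.length_cons, Nat.succ_mul]; omega

lemma exists_frac {p : ℕ} (hp : 2 ≤ p) (n : ℕ) (g : FP p) (hg : WL p n g) :
    ∃ u v : List ℕ, g = wd p u * (wd p v)⁻¹ ∧ u.length ≤ n ∧ v.length ≤ n ∧
      (∀ a ∈ u, a ≤ n * p) ∧ ∀ a ∈ v, a ≤ n * p := by
  obtain ⟨w, h0, h1, h2⟩ := hg
  induction w generalizing n g with
  | nil => exact ⟨[], [], by simpa using h2.symm, by simp, by simp, by simp, by simp⟩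
  | cons c w ih =>
    obtain ⟨n, rfl⟩ : ∃ k, n = k + 1 := ⟨n - 1, by simp at h0; omega⟩
    obtain ⟨u, v, e, hu, hv, bu, bv⟩ := ih n w.prod (by simpa using h0)
      (fun g hg => h1 g (by simp [hg])) rfl
    rw [List.prod_cons, e] at h2
    rw [Nat.succ_mul]
    rcases h1 c (by simp) with ⟨i, hi, hc⟩ | ⟨i, hi, hc⟩
    · refine ⟨i :: u, v, by rw [← h2, hc, wd_cons, mul_assoc], by simpa using hu, by omega, ?_, ?_⟩
      · intro a ha
        rcases List.mem_cons.mp ha with rfl | ha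
        · omega
        · have := bu a ha; omega
      · intro a ha
        have := bv a ha; omega
    · obtain ⟨l', t, h1, h2', h3, h4, h5⟩ := inv_push hp i (n * p) u bu
      refine ⟨l', v ++ t, ?_, by omega, by simp; omega, ?_, ?_⟩
      · rw [← h2, inv_eq_iff_eq_inv.mp hc, ← mul_assoc, h1, wd_append]; group
      · intro a ha
        have := h3 a ha; omega
      · intro a ha
        rcases List.mem_append.mp ha with ha | ha
        · have := bv a ha; omega
        · have := h5 a ha
          have : u.length * (p - 1) ≤ n * p := Nat.mul_le_mul hu (by omega)
          omega

/-! ### The action on `ℚ × ℤ` -/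

/-- Forward map of the generator `x_i`. -/
def tf (p i : ℕ) (z : ℚ × ℤ) : ℚ × ℤ :=
  if z.1 < i then z
  else if z.1 < i + p then (i + (z.1 - i) / p, z.2 + if z.1 = i then 1 else 0)
  else (z.1 - (p - 1), z.2)

/-- Backward map of the generator `x_i`. -/
def tb (p i : ℕ) (z : ℚ × ℤ) : ℚ × ℤ :=
  if z.1 < i then z
  else if z.1 < i + 1 then (i + (z.1 - i) * p, z.2 - if z.1 = i then 1 else 0)
  else (z.1 + (p - 1), z.2)

lemma tf_lt {p i : ℕ} {t : ℚ} (m : ℤ) (h : t < i) : tf p i (t, m) = (t, m) := by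
  simp [tf, h]

lemma tf_eq {p : ℕ} (hp : 2 ≤ p) (i : ℕ) (m : ℤ) : tf p i (i, m) = ((i : ℚ), m + 1) := by
  have : (0 : ℚ) < p := by exact_mod_cast (by omega : 0 < p)
  simp [tf, this]

lemma tf_mid {p i : ℕ} {t : ℚ} (m : ℤ) (h : i < t) (h' : t < i + p) :
    tf p i (t, m) = (i + (t - i) / p, m) := by
  simp [tf, h', not_lt.mpr h.le, h.ne']

lemma tf_ge {p i : ℕ} (hp : 2 ≤ p) {t : ℚ} (m : ℤ) (h : i + p ≤ t) :
    tf p i (t, m) = (t - (p - 1), m) := by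
  have : (0 : ℚ) < p := by exact_mod_cast (by omega : 0 < p)
  simp [tf, not_lt.mpr h, show ¬ t < i by linarith]

lemma tb_tf {p : ℕ} (hp : 2 ≤ p) (i : ℕ) (z : ℚ × ℤ) : tb p i (tf p i z) = z := by
  obtain ⟨t, m⟩ := z
  have hp' : (0 : ℚ) < p := by exact_mod_cast (by omega : 0 < p)
  rcases lt_trichotomy t (i : ℚ) with h | h | h
  · rw [tf_lt _ h]; simp [tb, h]
  · subst h; rw [tf_eq hp]; simp [tb]
  · rcases lt_or_ge t (i + p) with h' | h'
    · rw [tf_mid _ h h']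
      have h1 : 0 < (t - i) / p := div_pos (by linarith) hp'
      have h2 : (t - i) / p < 1 := by rw [div_lt_one hp']; linarith
      have h3 : (t - i) / p * p = t - i := by field_simp
      simp only [tb]
      rw [if_neg (by linarith), if_pos (by linarith), if_neg (by linarith)]
      ext1
      · simp only [add_sub_cancel_left, h3]; ring
      · simp
    · rw [tf_ge hp _ h']
      simp only [tb]
      rw [if_neg (by linarith), if_neg (by linarith)]
      ext1 <;> simp

lemma tf_tb {p : ℕ} (hp : 2 ≤ p) (i : ℕ) (z : ℚ × ℤ) : tf p i (tb p i z) = z := by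
  obtain ⟨t, m⟩ := z
  have hp' : (0 : ℚ) < p := by exact_mod_cast (by omega : 0 < p)
  rcases lt_trichotomy t (i : ℚ) with h | h | h
  · simp only [tb, if_pos h]; rw [tf_lt _ h]
  · subst h
    have : tb p i ((i : ℚ), m) = ((i : ℚ), m - 1) := by simp [tb]
    rw [this, tf_eq hp]; simp
  · rcases lt_or_ge t (i + 1) with h' | h'
    · simp only [tb]
      rw [if_neg (by linarith), if_pos h', if_neg h.ne']
      have h1 : 0 < (t - i) * p := mul_pos (by linarith) hp'
      have h2 : (t - i) * p < 1 * p := mul_lt_mul_of_pos_right (by linarith) hp'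
      rw [tf_mid _ (by linarith) (by linarith)]
      ext1
      · simp only [add_sub_cancel_left]; field_simp; ring
      · simp
    · simp only [tb]
      rw [if_neg (by linarith), if_neg (by linarith), tf_ge hp _ (by linarith)]
      ext1 <;> simp

lemma tf_rel {p i j : ℕ} (hp : 2 ≤ p) (hij : i < j) (z : ℚ × ℤ) :
    tf p j (tf p i z) = tf p i (tf p (j + (p - 1)) z) := by
  obtain ⟨t, m⟩ := z
  have hp' : (2 : ℚ) ≤ p := by exact_mod_cast hp
  have hij' : (i : ℚ) + 1 ≤ j := by exact_mod_cast hij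
  have hc : ((j + (p - 1) : ℕ) : ℚ) = j + (p - 1) := by
    push_cast [show 1 ≤ p by omega]; ring
  rcases lt_trichotomy t (i : ℚ) with h | h | h
  · rw [tf_lt m h, tf_lt m (by linarith), tf_lt m (by rw [hc]; linarith), tf_lt m h]
  · subst h
    rw [tf_lt (i := j + (p - 1)) m (by rw [hc]; linarith), tf_eq hp, tf_lt _ (by linarith)]
  · rcases lt_or_ge t (i + p) with h' | h'
    · have h2 : (t - i) / p < 1 := by rw [div_lt_one (by linarith)]; linarith
      rw [tf_lt (i := j + (p - 1)) m (by rw [hc]; linarith), tf_mid _ h h',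
        tf_lt _ (by linarith)]
    · rw [tf_ge hp _ h']
      rcases lt_trichotomy t ((j + (p - 1) : ℕ) : ℚ) with k | k | k
      · rw [tf_lt _ k, tf_ge hp _ h', tf_lt _ (by rw [hc] at k; linarith)]
      · rw [k, tf_eq hp, ← k, tf_ge hp _ h', show t - ((p : ℚ) - 1) = j by rw [k, hc]; ring,
          tf_eq hp]
      · rcases lt_or_ge t ((j + (p - 1) : ℕ) + p) with k' | k'
        · have h1 : 0 < (t - (j + (p - 1) : ℕ)) / p :=
            div_pos (by linarith) (by linarith)
          rw [tf_mid _ k k', tf_mid _ (by rw [hc] at k; linarith) (by rw [hc] at k'; linarith),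
            tf_ge hp _ (by rw [hc] at h1 ⊢; linarith)]
          rw [hc]
          ext1
          · simp only; field_simp; ring
          · rfl
        · rw [tf_ge hp _ k']
          rw [hc] at k'
          rw [tf_ge hp _ (by linarith), tf_ge hp _ (by linarith)]

/-- The permutation of `ℚ × ℤ` attached to `x_i`. -/
def tperm (p i : ℕ) (hp : 2 ≤ p) : Equiv.Perm (ℚ × ℤ) where
  toFun := tf p i
  invFun := tb p i
  left_inv := tb_tf hp i
  right_inv := tf_tb hp i

lemma exists_act {p : ℕ} (hp : 2 ≤ p) :
    ∃ φ : FP p →* Equiv.Perm (ℚ × ℤ), ∀ i z, φ (xg p i) z = tf p i z := by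
  obtain ⟨φ, h⟩ := exists_hom hp (fun i => tperm p i hp) (by
    intro i j hij
    ext1 z
    exact tf_rel hp hij z)
  refine ⟨φ, fun i z => ?_⟩
  rw [h]; rfl

/-- The action of `F(p)` on `ℚ × ℤ`. -/
noncomputable def act {p : ℕ} (hp : 2 ≤ p) : FP p →* Equiv.Perm (ℚ × ℤ) := (exists_act hp).choose

lemma act_xg {p : ℕ} (hp : 2 ≤ p) (i : ℕ) (z : ℚ × ℤ) : act hp (xg p i) z = tf p i z :=
  (exists_act hp).choose_spec i z

/-- translation equivariance -/
lemma act_wd_shift {p : ℕ} (hp : 2 ≤ p) (l : List ℕ) (t : ℚ) (m : ℤ) :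
    act hp (wd p l) (t, m) = ((act hp (wd p l) (t, 0)).1, (act hp (wd p l) (t, 0)).2 + m) := by
  induction l with
  | nil => simp
  | cons i l ih =>
    rw [wd_cons, map_mul, Equiv.Perm.mul_apply, Equiv.Perm.mul_apply, ih, act_xg, act_xg]
    generalize act hp (wd p l) (t, 0) = w
    obtain ⟨a, b⟩ := w
    simp only [tf]
    split_ifs <;> simp [add_right_comm]

/-- non-integers are not counted -/
lemma act_wd_nonint {p : ℕ} (hp : 2 ≤ p) (l : List ℕ) (t : ℚ) (m : ℤ) (ht : ∀ k : ℤ, t ≠ k) :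
    (∀ k : ℤ, (act hp (wd p l) (t, m)).1 ≠ k) ∧ (act hp (wd p l) (t, m)).2 = m := by
  induction l with
  | nil => simpa using ht
  | cons i l ih =>
    rw [wd_cons, map_mul, Equiv.Perm.mul_apply, act_xg]
    generalize act hp (wd p l) (t, m) = w at ih
    obtain ⟨a, b⟩ := w
    obtain ⟨h1, h2⟩ := ih
    simp only at h1 h2
    subst h2
    have hp' : (2 : ℚ) ≤ p := by exact_mod_cast hp
    rcases lt_trichotomy a (i : ℚ) with h | h | h
    · rw [tf_lt _ h]; exact ⟨h1, rfl⟩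
    · exact absurd h (by exact_mod_cast h1 i)
    · rcases lt_or_ge a (i + p) with h' | h'
      · rw [tf_mid _ h h']
        refine ⟨fun k hk => ?_, rfl⟩
        simp only at hk
        have k1 : 0 < (a - i) / p := div_pos (by linarith) (by linarith)
        have k2 : (a - i) / p < 1 := by rw [div_lt_one (by linarith)]; linarith
        have k3 : (i : ℚ) < k := by linarith
        have k4 : (k : ℚ) < i + 1 := by linarith
        have k5 : (i : ℤ) < k := by exact_mod_cast k3
        have k6 : k < (i : ℤ) + 1 := by exact_mod_cast k4
        omega
      · rw [tf_ge hp _ h']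
        refine ⟨fun k hk => ?_, rfl⟩
        simp only at hk
        apply h1 (k + (p - 1))
        push_cast
        linarith

/-- counting the smallest letter -/
lemma act_wd_count {p : ℕ} (hp : 2 ≤ p) (d i : ℕ) (l : List ℕ) (hl : ∀ a ∈ l, i ≤ a) :
    act hp ((l.map (fun a => xg p a ^ d)).prod) ((i : ℚ), 0) = ((i : ℚ), (d * l.count i : ℤ)) := by
  have hpow : ∀ a, i ≤ a → ∀ (n : ℕ) (m : ℤ), act hp (xg p a ^ n) ((i : ℚ), m) =
      ((i : ℚ), m + if a = i then (n : ℤ) else 0) := by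
    intro a ha n m
    induction n with
    | zero => simp
    | succ n ih =>
      rw [pow_succ', map_mul, Equiv.Perm.mul_apply, ih, act_xg]
      rcases ha.eq_or_lt with rfl | h
      · rw [tf_eq hp]; simp [add_assoc]
      · rw [tf_lt _ (by exact_mod_cast h)]; simp [h.ne']
  induction l with
  | nil => simp
  | cons a l ih =>
    rw [List.map_cons, List.prod_cons, map_mul, Equiv.Perm.mul_apply,
      ih (fun a ha => hl a (by simp [ha])), hpow a (hl a (by simp)), List.count_cons]
    ext1
    · rfl
    · simp only [beq_iff_eq]
      split_ifs <;> push_cast <;> ring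

lemma sorted_eq {p : ℕ} (hp : 2 ≤ p) {d : ℕ} (hd : 1 ≤ d) (l l' : List ℕ)
    (hl : l.Pairwise (· ≤ ·)) (hl' : l'.Pairwise (· ≤ ·))
    (h : (l.map (fun a => xg p a ^ d)).prod = (l'.map (fun a => xg p a ^ d)).prod) : l = l' := by
  have hcount : ∀ i, (∀ a ∈ l, i ≤ a) → (∀ a ∈ l', i ≤ a) → l.count i = l'.count i := by
    intro i h1 h2
    have e1 := act_wd_count hp d i l h1
    have e2 := act_wd_count hp d i l' h2
    rw [h, e2] at e1
    have := congrArg Prod.snd e1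
    simp only at this
    have hd' : (d : ℤ) ≠ 0 := by exact_mod_cast (by omega : d ≠ 0)
    have := mul_left_cancel₀ hd' this
    exact_mod_cast this.symm
  induction l generalizing l' with
  | nil =>
    cases l' with
    | nil => rfl
    | cons i l' =>
      rw [List.pairwise_cons] at hl'
      have := hcount i (by simp) (by simpa using hl'.1)
      simp at this
  | cons i l ih =>
    rw [List.pairwise_cons] at hl
    cases l' with
    | nil =>
      have := hcount i (by simpa using hl.1) (by simp)
      simp at this
    | cons j l' =>
      rw [List.pairwise_cons] at hl'
      have hij : i = j := by
        rcases lt_trichotomy i j with hlt | h' | hlt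
        · have := hcount i (by simpa using hl.1) (by
            intro a ha
            rcases List.mem_cons.mp ha with rfl | ha
            · exact hlt.le
            · exact hlt.le.trans (hl'.1 a ha))
          rw [List.count_cons_self] at this
          have h0 : (j :: l').count i = 0 := by
            rw [List.count_eq_zero]
            intro hm
            rcases List.mem_cons.mp hm with hm | hm
            · omega
            · have := hl'.1 i hm; omega
          omega
        · exact h'
        · have := hcount j (by
            intro a ha
            rcases List.mem_cons.mp ha with rfl | ha
            · exact hlt.le
            · exact hlt.le.trans (hl.1 a ha)) (by simpa using hl'.1)
          rw [List.count_cons_self] at this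
          have h0 : (i :: l).count j = 0 := by
            rw [List.count_eq_zero]
            intro hm
            rcases List.mem_cons.mp hm with hm | hm
            · omega
            · have := hl.1 j hm; omega
          omega
      subst hij
      rw [List.map_cons, List.map_cons, List.prod_cons, List.prod_cons] at h
      have h2 := mul_left_cancel h
      congr 1
      refine ih l' hl.2 hl'.2 h2 ?_
      intro k h1 h2'
      have e1 := act_wd_count hp d k l h1
      have e2 := act_wd_count hp d k l' h2'
      rw [h2, e2] at e1
      have := congrArg Prod.snd e1
      simp only at this
      have hd' : (d : ℤ) ≠ 0 := by exact_mod_cast (by omega : d ≠ 0)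
      have := mul_left_cancel₀ hd' this
      exact_mod_cast this.symm

lemma hom_wd {p q d : ℕ} (j2 : FP q →* FP p) (hj : ∀ i, j2 (xg q i) = xg p i ^ d) (l : List ℕ) :
    j2 (wd q l) = (l.map (fun a => xg p a ^ d)).prod := by
  induction l with
  | nil => simp
  | cons i l ih => simp [ih, hj]

lemma hom_injective {p q d : ℕ} (hp : 2 ≤ p) (hq : 2 ≤ q) (hd : 1 ≤ d) (j2 : FP q →* FP p)
    (hj : ∀ i, j2 (xg q i) = xg p i ^ d) : Function.Injective j2 := by
  rw [injective_iff_map_eq_one]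
  intro x hx
  obtain ⟨u, v, e, -, -, hu, hv⟩ := exists_frac hq _ x (WL_wlen hq x)
  obtain ⟨u', a1, -, a3, -⟩ := exists_sorted hq _ u hu
  obtain ⟨v', b1, -, b3, -⟩ := exists_sorted hq _ v hv
  rw [e, ← a3, ← b3, map_mul, map_inv, mul_inv_eq_one, hom_wd j2 hj, hom_wd j2 hj] at hx
  rw [e, ← a3, ← b3, sorted_eq hp hd u' v' a1 b1 hx, mul_inv_cancel]

/-- The image preserves the second coordinate modulo `d`. -/
lemma hom_snd {p q d : ℕ} (hp : 2 ≤ p) (j2 : FP q →* FP p)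
    (hj : ∀ i, j2 (xg q i) = xg p i ^ d) (x : FP q) :
    ∀ z, (act hp (j2 x) z).2 ≡ z.2 [ZMOD d] := by
  have hne : ∀ i : ℕ, ∀ t : ℚ, ∀ m : ℤ, t ≠ i → (tf p i (t, m)).1 ≠ i ∧ (tf p i (t, m)).2 = m := by
    intro i t m ht
    have hp' : (2 : ℚ) ≤ p := by exact_mod_cast hp
    rcases lt_trichotomy t (i : ℚ) with h | h | h
    · rw [tf_lt _ h]; exact ⟨ht, rfl⟩
    · exact absurd h ht
    · rcases lt_or_ge t (i + p) with h' | h'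
      · rw [tf_mid _ h h']
        have k1 : 0 < (t - i) / p := div_pos (by linarith) (by linarith)
        exact ⟨by simp only; intro h; linarith, rfl⟩
      · rw [tf_ge hp _ h']
        exact ⟨by simp only; intro h; linarith, rfl⟩
  have hpow : ∀ i n : ℕ, ∀ t : ℚ, ∀ m : ℤ, (t ≠ i →
      (act hp (xg p i ^ n) (t, m)).1 ≠ i ∧ (act hp (xg p i ^ n) (t, m)).2 = m) ∧
      (t = i → act hp (xg p i ^ n) (t, m) = (t, m + n)) := by
    intro i n t m
    induction n with
    | zero => exact ⟨fun h => by simpa using h, fun h => by simp⟩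
    | succ n ih =>
      rw [pow_succ', map_mul, Equiv.Perm.mul_apply, act_xg]
      constructor
      · intro h
        have h1 := ih.1 h
        have h2 := hne i _ (act hp (xg p i ^ n) (t, m)).2 h1.1
        exact ⟨h2.1, h2.2.trans h1.2⟩
      · intro h
        rw [ih.2 h, h, tf_eq hp]; push_cast; rw [add_assoc]
  induction x using FP_induction with
  | h1 => intro z; simp
  | hx i =>
    rintro ⟨t, m⟩
    rw [hj]
    by_cases h : t = i
    · rw [(hpow i d t m).2 h]; simp
    · rw [((hpow i d t m).1 h).2]
  | hm a b ha hb =>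
    intro z
    rw [map_mul, map_mul, Equiv.Perm.mul_apply]
    exact (ha _).trans (hb z)
  | hi a ha =>
    intro z
    have := ha (act hp (j2 a⁻¹) z)
    rw [← Equiv.Perm.mul_apply, ← map_mul, ← map_mul, mul_inv_cancel, map_one, map_one] at this
    exact this.symm

/-! ### Completion of forests -/

/-- Descending product `x_{j+N-1}^{e} ⋯ x_j^{e}`. -/
def up (p : ℕ) (e : ℕ → ℕ) (j : ℕ) : ℕ → FP p
  | 0 => 1
  | N + 1 => xg p (j + N) ^ e (j + N) * up p e j N

lemma up_add (p : ℕ) (e : ℕ → ℕ) (j a b : ℕ) :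
    up p e j (a + b) = up p e (j + a) b * up p e j a := by
  induction b with
  | zero => simp [up]
  | succ b ih => rw [← add_assoc, up, up, ih, ← mul_assoc, add_assoc]

lemma up_congr (p : ℕ) (e e' : ℕ → ℕ) (j N : ℕ) (h : ∀ k, j ≤ k → k < j + N → e k = e' k) :
    up p e j N = up p e' j N := by
  induction N with
  | zero => rfl
  | succ N ih =>
    rw [up, up, h _ (by omega) (by omega), ih (fun k h1 h2 => h k h1 (by omega))]

lemma up_zero (p : ℕ) (e : ℕ → ℕ) (j N : ℕ) (h : ∀ k, j ≤ k → k < j + N → e k = 0) :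
    up p e j N = 1 := by
  induction N with
  | zero => rfl
  | succ N ih =>
    rw [up, h _ (by omega) (by omega), ih (fun k h1 h2 => h k h1 (by omega))]; simp

lemma up_shift {p : ℕ} (hp : 2 ≤ p) (e e' : ℕ → ℕ) (i N : ℕ)
    (h : ∀ k, i < k → e' (k + (p - 1)) = e k) :
    xg p i * up p e' (i + 1 + (p - 1)) N = up p e (i + 1) N * xg p i := by
  induction N with
  | zero => simp [up]
  | succ N ih =>
    rw [up, up, mul_assoc, ← ih, ← mul_assoc, ← mul_assoc,
      show i + 1 + (p - 1) + N = (i + 1 + N) + (p - 1) by omega, h _ (by omega),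
      pow_conj (xg_rel hp (show i < i + 1 + N by omega))]

lemma up_conj {p : ℕ} (hp : 2 ≤ p) (e : ℕ → ℕ) (D : ℕ) (he : ∀ k, e k ≤ D) (i J : ℕ)
    (hJ : J ≤ i) : ∃ i', i' ≤ i + J * (D * (p - 1)) ∧ i ≤ i' ∧
      ∀ j, j = i → xg p j * up p e 0 J = up p e 0 J * xg p i' := by
  induction J generalizing i with
  | zero => exact ⟨i, by simp, le_rfl, by simp [up]⟩
  | succ J ih =>
    obtain ⟨i', h1, h2, h3⟩ := ih (i + e J * (p - 1)) (by omega)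
    refine ⟨i', ?_, by omega, ?_⟩
    · have : e J * (p - 1) ≤ D * (p - 1) := Nat.mul_le_mul_right _ (he J)
      rw [Nat.succ_mul]; omega
    · rintro j rfl
      rw [up, Nat.zero_add, ← mul_assoc, xg_pow_comm hp (by omega), mul_assoc, h3 _ rfl, mul_assoc]

/-- Exponent needed to complete leaf `k` of `g`. -/
noncomputable def ee {p : ℕ} (hp : 2 ≤ p) (d : ℕ) (g : FP p) (k : ℕ) : ℕ :=
  ((-(act hp g ((k : ℚ), 0)).2) % (d : ℤ)).toNat

lemma ee_le {p : ℕ} (hp : 2 ≤ p) {d : ℕ} (hd : 1 ≤ d) (g : FP p) (k : ℕ) : ee hp d g k ≤ d := by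
  have := Int.emod_lt_of_pos (-(act hp g ((k : ℚ), 0)).2) (show (0 : ℤ) < d by omega)
  unfold ee
  omega

lemma emod_step {d : ℕ} (hd : 1 ≤ d) (z : ℤ) :
    (((-z) % (d : ℤ)).toNat = 0 ∧ 1 + ((-(z + 1)) % (d : ℤ)).toNat = d) ∨
    (1 + ((-(z + 1)) % (d : ℤ)).toNat = ((-z) % (d : ℤ)).toNat) := by
  have hd' : (0 : ℤ) < d := by omega
  have h1 := Int.emod_lt_of_pos (-z) hd'
  have h2 := Int.emod_nonneg (-z) hd'.ne'
  have h3 := Int.emod_add_mul_ediv (-z) d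
  rcases h2.eq_or_lt with h | h
  · left
    have : (-(z + 1)) % (d : ℤ) = d - 1 := by
      rw [← h] at h3
      rw [show -(z + 1) = (d - 1) + d * ((-z) / d - 1) by linarith, Int.add_mul_emod_self_left,
        Int.emod_eq_of_lt (by omega) (by omega)]
    rw [this]; omega
  · right
    have : (-(z + 1)) % (d : ℤ) = (-z) % d - 1 := by
      conv_lhs => rw [show -(z + 1) = ((-z) % d - 1) + d * ((-z) / d) by linarith]
      rw [Int.add_mul_emod_self_left, Int.emod_eq_of_lt (by omega) (by omega)]
    rw [this]; omega

lemma ee_lt {p : ℕ} (hp : 2 ≤ p) (d : ℕ) (g : FP p) (i k : ℕ) (h : k < i) :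
    ee hp d (g * xg p i) k = ee hp d g k := by
  rw [ee, map_mul, Equiv.Perm.mul_apply, act_xg, tf_lt _ (by exact_mod_cast h), ee]

lemma ee_gt {p : ℕ} (hp : 2 ≤ p) (d : ℕ) (g : FP p) (i k : ℕ) (h : i < k) :
    ee hp d (g * xg p i) (k + (p - 1)) = ee hp d g k := by
  have hc : ((k + (p - 1) : ℕ) : ℚ) = k + (p - 1) := by
    push_cast [show 1 ≤ p by omega]; ring
  have h' : (i : ℚ) + 1 ≤ k := by exact_mod_cast h
  rw [ee, map_mul, Equiv.Perm.mul_apply, act_xg, hc, tf_ge hp _ (by linarith), ee]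
  simp

lemma ee_mid {p : ℕ} (hp : 2 ≤ p) (d : ℕ) (l : List ℕ) (i k : ℕ) (h : i < k)
    (h' : k < i + p) : ee hp d (wd p l * xg p i) k = 0 := by
  have h1 : (i : ℚ) < k := by exact_mod_cast h
  have h2 : (k : ℚ) < i + p := by exact_mod_cast h'
  have hp' : (2 : ℚ) ≤ p := by exact_mod_cast hp
  rw [ee, map_mul, Equiv.Perm.mul_apply, act_xg, tf_mid _ h1 h2, (act_wd_nonint hp l _ 0 _).2]
  · simp
  · intro n hk
    have k1 : 0 < ((k : ℚ) - i) / p := div_pos (by linarith) (by linarith)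
    have k2 : ((k : ℚ) - i) / p < 1 := by rw [div_lt_one (by linarith)]; linarith
    have k3 : (i : ℚ) < n := by linarith
    have k4 : (n : ℚ) < i + 1 := by linarith
    have k5 : (i : ℤ) < n := by exact_mod_cast k3
    have k6 : n < (i : ℤ) + 1 := by exact_mod_cast k4
    omega

lemma ee_eq {p : ℕ} (hp : 2 ≤ p) {d : ℕ} (hd : 1 ≤ d) (l : List ℕ) (i : ℕ) :
    (ee hp d (wd p l) i = 0 ∧ 1 + ee hp d (wd p l * xg p i) i = d) ∨
    1 + ee hp d (wd p l * xg p i) i = ee hp d (wd p l) i := by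
  unfold ee
  rw [map_mul, Equiv.Perm.mul_apply, act_xg, tf_eq hp, zero_add, act_wd_shift hp l _ 1]
  exact emod_step hd _

lemma completion {p q d : ℕ} (hp : 2 ≤ p) (hd : 1 ≤ d)
    (j2 : FP q →* FP p) (hj : ∀ i, j2 (xg q i) = xg p i ^ d) (m : ℕ) (l : List ℕ)
    (hm : ∀ a ∈ l, a ≤ m) :
    ∃ M0, ∀ M, M0 ≤ M → ∃ a : List ℕ, a.length ≤ l.length ∧
      (∀ i ∈ a, i ≤ m + m * (d * (p - 1))) ∧
      wd p l * up p (ee hp d (wd p l)) 0 M = j2 (wd q a) := by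
  induction l using List.reverseRecOn with
  | nil =>
    refine ⟨0, fun M _ => ⟨[], by simp, by simp, ?_⟩⟩
    rw [up_zero]
    · simp
    · intro k _ _; simp [ee]
  | append_singleton l i ih =>
    obtain ⟨M0, ih⟩ := ih (fun a ha => hm a (by simp [ha]))
    have hi : i ≤ m := hm i (by simp)
    refine ⟨max M0 (i + 1) + (p - 1), fun M hM => ?_⟩
    obtain ⟨N, rfl⟩ : ∃ N, M = (i + 1 + (p - 1)) + N := ⟨M - (i + 1 + (p - 1)), by omega⟩
    obtain ⟨a, ha1, ha2, ha3⟩ := ih (i + 1 + N) (by omega)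
    have hw : wd p (l ++ [i]) = wd p l * xg p i := by simp
    rw [hw]
    set u := wd p l with hu
    set e := ee hp d u with he
    set e' := ee hp d (u * xg p i) with he'
    have E1 : up p e' 0 (i + 1 + (p - 1) + N) =
        up p e' (i + 1 + (p - 1)) N * (xg p i ^ e' i * up p e 0 i) := by
      rw [up_add, up_add, up_zero p e' (0 + (i + 1)) (p - 1), one_mul, up, Nat.zero_add,
        Nat.zero_add, up_congr p e' e 0 i]
      · intro k _ hk
        exact ee_lt hp d u i k (by omega)
      · intro k h1 h2
        exact ee_mid hp d l i k (by omega) (by omega)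
    have E2 : u * xg p i * up p e' 0 (i + 1 + (p - 1) + N) =
        u * (up p e (i + 1) N * (xg p i ^ (1 + e' i) * up p e 0 i)) := by
      rw [E1, mul_assoc, ← mul_assoc (xg p i),
        up_shift hp e e' i N (fun k hk => ee_gt hp d u i k hk), pow_add, pow_one]
      simp only [mul_assoc]
    have E3 : up p e 0 (i + 1 + N) = up p e (i + 1) N * (xg p i ^ e i * up p e 0 i) := by
      rw [up_add, up, Nat.zero_add, Nat.zero_add]
    rw [E2]
    rcases ee_eq hp hd l i with ⟨h0, h1⟩ | h1
    · obtain ⟨i', b1, -, b3⟩ := up_conj hp e d (ee_le hp hd u) i i le_rfl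
      refine ⟨a ++ [i'], by simpa using ha1, ?_, ?_⟩
      · intro b hb
        rcases List.mem_append.mp hb with hb | hb
        · exact ha2 b hb
        · simp only [List.mem_singleton] at hb
          subst hb
          have : i * (d * (p - 1)) ≤ m * (d * (p - 1)) := Nat.mul_le_mul_right _ hi
          omega
      · have h0' : e i = 0 := h0
        rw [wd_append, map_mul, ← ha3, E3, h0', wd_cons, wd_nil, mul_one, hj, h1,
          pow_conj (b3 i rfl)]
        simp only [pow_zero, one_mul, mul_assoc]
    · refine ⟨a, by simp; omega, ha2, ?_⟩
      rw [h1, ← ha3, E3]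

lemma lower {p q d : ℕ} (hp : 2 ≤ p) (hq : 2 ≤ q) (hd : 1 ≤ d)
    (j2 : FP q →* FP p) (hj : ∀ i, j2 (xg q i) = xg p i ^ d) (x : FP q) :
    wlen q x ≤ (2 * ((2 * q + 1) * (1 + (p + p * (d * (p - 1)))))) * wlen p (j2 x) := by
  set n := wlen p (j2 x) with hn
  obtain ⟨u, v, e, hu, hv, bu, bv⟩ := exists_frac hp n (j2 x) (WL_wlen hp _)
  have hee : ee hp d (wd p u) = ee hp d (wd p v) := by
    funext k
    have h1 : wd p u = j2 x * wd p v := by rw [e]; group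
    unfold ee
    rw [h1, map_mul, Equiv.Perm.mul_apply]
    congr 1
    exact (hom_snd hp j2 hj x _).neg
  obtain ⟨M1, h1⟩ := completion hp hd j2 hj (n * p) u bu
  obtain ⟨M2, h2⟩ := completion hp hd j2 hj (n * p) v bv
  obtain ⟨a, a1, a2, a3⟩ := h1 (max M1 M2) (le_max_left _ _)
  obtain ⟨b, b1, b2, b3⟩ := h2 (max M1 M2) (le_max_right _ _)
  have hx : x = wd q a * (wd q b)⁻¹ := by
    apply hom_injective hp hq hd j2 hj
    rw [map_mul, map_inv, ← a3, ← b3, e, hee]; group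
  have wa := WL_wd hq n _ a (a1.trans hu) a2
  have wb := WL_wd hq n _ b (b1.trans hv) b2
  have := (wa.mul wb.inv).wlen_le
  rw [← hx] at this
  refine this.trans (le_of_eq ?_)
  ring

lemma upper {p q d : ℕ} (hp : 2 ≤ p) (hq : 2 ≤ q)
    (j2 : FP q →* FP p) (hj : ∀ i, j2 (xg q i) = xg p i ^ d) (x : FP q) :
    wlen p (j2 x) ≤ ((2 * p + 1) * (d + q)) * wlen q x := by
  have key : ∀ i < q, WL p ((2 * p + 1) * (d + q)) (j2 (xg q i)) := by
    intro i hi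
    have := WL_wd hp d q (List.replicate d i) (by simp) (by
      intro a ha
      rw [List.eq_of_mem_replicate ha]; exact hi.le)
    rw [hj]
    simpa [wd] using this
  obtain ⟨w, h0, h1, h2⟩ := WL_wlen hq x
  have : WL p ((2 * p + 1) * (d + q) * w.length) (j2 w.prod) := by
    clear h0 h2
    induction w with
    | nil => simpa using WL.one p
    | cons c w ih =>
      rw [List.prod_cons, map_mul, List.length_cons, Nat.mul_succ, add_comm]
      refine WL.mul ?_ (ih (fun g hg => h1 g (by simp [hg])))
      rcases h1 c (by simp) with ⟨i, hi, hc⟩ | ⟨i, hi, hc⟩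
      · rw [hc]; exact key i hi
      · rw [inv_eq_iff_eq_inv.mp hc, map_inv]; exact (key i hi).inv
  rw [h2] at this
  exact this.wlen_le.trans (Nat.mul_le_mul_left _ h0)

end Helpers

/-- Proposition 9. If `q - 1 = d(p - 1)`, the assignment `x_i ↦ x_i^d`
determines a group homomorphism `j₂ : F(q) → F(p)` which is a quasi-isometric embedding. -/
theorem statement5 (p q d : ℕ) (hp : 2 ≤ p) (hq : 2 ≤ q) (hd : 1 ≤ d)
    (hpq : q - 1 = d * (p - 1)) :
    ∃ j2 : FP q →* FP p, (∀ i : ℕ, j2 (xg q i) = xg p i ^ d) ∧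
      Function.Injective j2 ∧
      ∃ C : ℝ, 1 ≤ C ∧ ∀ x : FP q,
        (1 / C) * (wlen q x : ℝ) ≤ (wlen p (j2 x) : ℝ) ∧
          (wlen p (j2 x) : ℝ) ≤ C * (wlen q x : ℝ) := by
  obtain ⟨j2, hj⟩ := exists_hom hq (fun i => xg p i ^ d) (by
    intro i j hij
    apply pow_conj
    rw [hpq]
    exact xg_pow_comm hp hij d)
  refine ⟨j2, hj, hom_injective hp hq hd j2 hj, ?_⟩
  have hl := lower hp hq hd j2 hj
  have hu := upper hp hq j2 hj
  set A := 2 * ((2 * q + 1) * (1 + (p + p * (d * (p - 1))))) with hA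
  set B := (2 * p + 1) * (d + q) with hB
  refine ⟨((1 + A + B : ℕ) : ℝ), by exact_mod_cast (by omega : 1 ≤ 1 + A + B), fun x => ⟨?_, ?_⟩⟩
  · rw [one_div, inv_mul_le_iff₀ (by positivity)]
    have := (hl x).trans (Nat.mul_le_mul_right _ (show A ≤ 1 + A + B by omega))
    exact_mod_cast this
  · have := (hu x).trans (Nat.mul_le_mul_right _ (show B ≤ 1 + A + B by omega))
    exact_mod_cast this
end
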